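/- arXiv:1211.6080 — 3 statements merged into one kernel-verified Lean document; each statement's English description precedes it below -/
import Mathlib

section
/- Let X be a real Hilbert space, I ⊆ ℝ an interval, A : I → 𝓛(X,X) continuous, and x : I → X a solution of the linear differential equation ẋ = A(t)x. Then for all t, t₀ ∈ I with t ≥ t₀, ‖x(t₀)‖·exp(∫_{t₀}^{t} μ₋(A(τ)) dτ) ≤ ‖x(t)‖ ≤ ‖x(t₀)‖·exp(∫_{t₀}^{t} μ₊(A(τ)) dτ) (Ważewski's inequality). -/
open RealInnerProductSpace intervalIntegral

/-- `μ₋(A) = inf {⟨Ax,x⟩ : ‖x‖ = 1}`. -/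
noncomputable def muMinus {X : Type*} [NormedAddCommGroup X] [InnerProductSpace ℝ X]
    (A : X →L[ℝ] X) : ℝ :=
  sInf {c : ℝ | ∃ y : X, ‖y‖ = 1 ∧ c = ⟪A y, y⟫}

/-- `μ₊(A) = sup {⟨Ax,x⟩ : ‖x‖ = 1}`. -/
noncomputable def muPlus {X : Type*} [NormedAddCommGroup X] [InnerProductSpace ℝ X]
    (A : X →L[ℝ] X) : ℝ :=
  sSup {c : ℝ | ∃ y : X, ‖y‖ = 1 ∧ c = ⟪A y, y⟫}

/-!
Along a solution, `d/dt ‖x‖² = 2⟪A x, x⟫` lies between `2 μ₋(A) ‖x‖²` and `2 μ₊(A) ‖x‖²`, since the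
quadratic form of `A` is bounded on the unit sphere by `μ₋(A)` and `μ₊(A)` and is homogeneous of
degree two. Both `μ₋` and `μ₊` are `1`-Lipschitz in the operator norm, so `μ₋ ∘ A` and `μ₊ ∘ A` are
continuous, and Grönwall's inequality with a variable coefficient integrates the two differential
inequalities for `‖x‖²`.
-/

open Set

section QuadraticForm

variable {X : Type*} [NormedAddCommGroup X] [InnerProductSpace ℝ X]

theorem inner_apply_self_le_opNorm_of_norm_eq_one (A : X →L[ℝ] X) {y : X} (hy : ‖y‖ = 1) :
    ⟪A y, y⟫ ≤ ‖A‖ :=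
  calc ⟪A y, y⟫ ≤ ‖A y‖ * ‖y‖ := real_inner_le_norm (A y) y
    _ ≤ ‖A‖ := by simpa only [hy, mul_one] using A.le_opNorm y

theorem inner_apply_self_le_muPlus_of_norm_eq_one (A : X →L[ℝ] X) {y : X} (hy : ‖y‖ = 1) :
    ⟪A y, y⟫ ≤ muPlus A := by
  refine le_csSup ⟨‖A‖, ?_⟩ ⟨y, hy, rfl⟩
  rintro _ ⟨z, hz, rfl⟩
  exact inner_apply_self_le_opNorm_of_norm_eq_one A hz

theorem inner_apply_self_le_muPlus_mul_sq (A : X →L[ℝ] X) (y : X) :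
    ⟪A y, y⟫ ≤ muPlus A * ‖y‖ ^ 2 := by
  rcases eq_or_ne y 0 with rfl | hy
  · simp
  have h_unit : ‖‖y‖⁻¹ • y‖ = 1 := norm_smul_inv_norm (𝕜 := ℝ) hy
  have h_form : ⟪A (‖y‖⁻¹ • y), ‖y‖⁻¹ • y⟫ = ⟪A y, y⟫ / ‖y‖ ^ 2 := by
    rw [map_smul, real_inner_smul_left, real_inner_smul_right]
    ring
  rw [← div_le_iff₀ (by positivity), ← h_form]
  exact inner_apply_self_le_muPlus_of_norm_eq_one A h_unit

theorem muMinus_eq_neg_muPlus_neg (A : X →L[ℝ] X) : muMinus A = -muPlus (-A) := by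
  rw [muMinus, muPlus, Real.sInf_def]
  congr 2
  ext c
  simp only [mem_neg, mem_ofPred_eq, neg_apply, inner_neg_left, neg_eq_iff_eq_neg]

theorem muMinus_mul_sq_le_inner_apply_self (A : X →L[ℝ] X) (y : X) :
    muMinus A * ‖y‖ ^ 2 ≤ ⟪A y, y⟫ := by
  have h := inner_apply_self_le_muPlus_mul_sq (-A) y
  rw [neg_apply, inner_neg_left] at h
  rw [muMinus_eq_neg_muPlus_neg]
  linarith

theorem muPlus_le_muPlus_add_norm_sub (A B : X →L[ℝ] X) :
    muPlus A ≤ muPlus B + ‖A - B‖ := by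
  -- On the trivial space the unit sphere is empty and `muPlus` takes the junk value `sSup ∅ = 0`.
  rcases subsingleton_or_nontrivial X with _ | _
  · simp [Subsingleton.elim A B]
  obtain ⟨y, hy⟩ := exists_norm_eq X zero_le_one
  refine csSup_le ⟨_, y, hy, rfl⟩ ?_
  rintro _ ⟨z, hz, rfl⟩
  calc ⟪A z, z⟫ = ⟪B z, z⟫ + ⟪(A - B) z, z⟫ := by rw [sub_apply, inner_sub_left]; ring
    _ ≤ muPlus B + ‖A - B‖ :=
      add_le_add (inner_apply_self_le_muPlus_of_norm_eq_one B hz)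
        (inner_apply_self_le_opNorm_of_norm_eq_one (A - B) hz)

theorem lipschitzWith_muPlus : LipschitzWith 1 (muPlus : (X →L[ℝ] X) → ℝ) :=
  LipschitzWith.of_le_add fun A B ↦ by
    simpa only [dist_eq_norm] using muPlus_le_muPlus_add_norm_sub A B

theorem lipschitzWith_muMinus : LipschitzWith 1 (muMinus : (X →L[ℝ] X) → ℝ) :=
  LipschitzWith.of_le_add fun A B ↦ by
    have h := muPlus_le_muPlus_add_norm_sub (-B) (-A)
    rw [neg_sub_neg, ← dist_eq_norm] at h
    rw [muMinus_eq_neg_muPlus_neg A, muMinus_eq_neg_muPlus_neg B]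
    linarith

end QuadraticForm

section Gronwall

theorem hasDerivAt_integral_of_continuousOn_Icc {E : Type*} [NormedAddCommGroup E] [NormedSpace ℝ E]
    [CompleteSpace E] {f : ℝ → E} {a b s : ℝ} (hf : ContinuousOn f (Icc a b)) (hs : s ∈ Ioo a b) :
    HasDerivAt (fun u ↦ ∫ τ in a..u, f τ) (f s) s :=
  integral_hasDerivAt_right
    ((hf.mono (Icc_subset_Icc_right hs.2.le)).intervalIntegrable_of_Icc hs.1.le)
    ((hf.mono Ioo_subset_Icc_self).stronglyMeasurableAtFilter isOpen_Ioo s hs)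
    (hf.continuousAt (Icc_mem_nhds hs.1 hs.2))

variable {a b : ℝ} {g g' k : ℝ → ℝ}

theorem antitoneOn_mul_exp_neg_integral (hk : ContinuousOn k (Icc a b))
    (hg : ContinuousOn g (Icc a b)) (hg' : ∀ s ∈ Ioo a b, HasDerivAt g (g' s) s)
    (hle : ∀ s ∈ Ioo a b, g' s ≤ k s * g s) :
    AntitoneOn (fun s ↦ g s * Real.exp (-∫ τ in a..s, k τ)) (Icc a b) := by
  rcases lt_or_ge b a with hba | hab
  · exact (subsingleton_Icc_of_ge hba.le).antitoneOn _
  have h_primitive : ContinuousOn (fun s ↦ ∫ τ in a..s, k τ) (Icc a b) := by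
    simpa only [uIcc_of_le hab] using
      continuousOn_primitive_interval' (hk.intervalIntegrable_of_Icc hab) left_mem_uIcc
  have h_deriv : ∀ s ∈ Ioo a b, HasDerivAt (fun s ↦ g s * Real.exp (-∫ τ in a..s, k τ))
      ((g' s - k s * g s) * Real.exp (-∫ τ in a..s, k τ)) s := fun s hs ↦
    ((hg' s hs).mul (hasDerivAt_integral_of_continuousOn_Icc hk hs).fun_neg.exp).congr_deriv
      (by ring)
  refine antitoneOn_of_hasDerivWithinAt_nonpos (convex_Icc a b) (hg.mul h_primitive.neg.rexp)
    (f' := fun s ↦ (g' s - k s * g s) * Real.exp (-∫ τ in a..s, k τ)) ?_ ?_ <;>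
    rw [interior_Icc]
  · exact fun s hs ↦ (h_deriv s hs).hasDerivWithinAt
  · exact fun s hs ↦
      mul_nonpos_of_nonpos_of_nonneg (sub_nonpos.2 (hle s hs)) (Real.exp_nonneg _)

theorem le_mul_exp_integral_of_deriv_le (hab : a ≤ b) (hk : ContinuousOn k (Icc a b))
    (hg : ContinuousOn g (Icc a b)) (hg' : ∀ s ∈ Ioo a b, HasDerivAt g (g' s) s)
    (hle : ∀ s ∈ Ioo a b, g' s ≤ k s * g s) :
    g b ≤ g a * Real.exp (∫ τ in a..b, k τ) := by
  have h := antitoneOn_mul_exp_neg_integral hk hg hg' hle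
    (left_mem_Icc.2 hab) (right_mem_Icc.2 hab) hab
  simp only [integral_same, neg_zero, Real.exp_zero, mul_one] at h
  rwa [Real.exp_neg, ← div_eq_mul_inv, div_le_iff₀ (Real.exp_pos _)] at h

theorem mul_exp_integral_le_of_le_deriv (hab : a ≤ b) (hk : ContinuousOn k (Icc a b))
    (hg : ContinuousOn g (Icc a b)) (hg' : ∀ s ∈ Ioo a b, HasDerivAt g (g' s) s)
    (hle : ∀ s ∈ Ioo a b, k s * g s ≤ g' s) :
    g a * Real.exp (∫ τ in a..b, k τ) ≤ g b := by
  have h := le_mul_exp_integral_of_deriv_le hab hk hg.neg (fun s hs ↦ (hg' s hs).neg)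
    fun s hs ↦ by simpa only [Pi.neg_apply, mul_neg, neg_le_neg_iff] using hle s hs
  simpa only [Pi.neg_apply, neg_mul, neg_le_neg_iff] using h

theorem mul_exp_integral_sq (c : ℝ) :
    (c * Real.exp (∫ τ in a..b, k τ)) ^ 2 = c ^ 2 * Real.exp (∫ τ in a..b, 2 * k τ) := by
  rw [integral_const_mul, mul_pow, ← Real.exp_nat_mul, Nat.cast_ofNat]

end Gronwall

section NormGrowth

variable {X : Type*} [NormedAddCommGroup X] [InnerProductSpace ℝ X]
  {a b : ℝ} {x x' : ℝ → X} {k : ℝ → ℝ}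

theorem norm_le_mul_exp_integral_of_inner_deriv_le (hab : a ≤ b) (hk : ContinuousOn k (Icc a b))
    (hx : ContinuousOn x (Icc a b)) (hx' : ∀ s ∈ Ioo a b, HasDerivAt x (x' s) s)
    (hle : ∀ s ∈ Ioo a b, ⟪x' s, x s⟫ ≤ k s * ‖x s‖ ^ 2) :
    ‖x b‖ ≤ ‖x a‖ * Real.exp (∫ τ in a..b, k τ) := by
  refine le_of_sq_le_sq ?_ (by positivity)
  rw [mul_exp_integral_sq]
  refine le_mul_exp_integral_of_deriv_le hab (hk.const_mul 2) (hx.norm.pow 2)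
    (fun s hs ↦ (hx' s hs).norm_sq) fun s hs ↦ ?_
  rw [real_inner_comm, mul_assoc]
  exact mul_le_mul_of_nonneg_left (hle s hs) zero_le_two

theorem mul_exp_integral_le_norm_of_le_inner_deriv (hab : a ≤ b) (hk : ContinuousOn k (Icc a b))
    (hx : ContinuousOn x (Icc a b)) (hx' : ∀ s ∈ Ioo a b, HasDerivAt x (x' s) s)
    (hle : ∀ s ∈ Ioo a b, k s * ‖x s‖ ^ 2 ≤ ⟪x' s, x s⟫) :
    ‖x a‖ * Real.exp (∫ τ in a..b, k τ) ≤ ‖x b‖ := by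
  refine le_of_sq_le_sq ?_ (norm_nonneg _)
  rw [mul_exp_integral_sq]
  refine mul_exp_integral_le_of_le_deriv hab (hk.const_mul 2) (hx.norm.pow 2)
    (fun s hs ↦ (hx' s hs).norm_sq) fun s hs ↦ ?_
  rw [real_inner_comm, mul_assoc]
  exact mul_le_mul_of_nonneg_left (hle s hs) zero_le_two

end NormGrowth

theorem stmt_1_general {X : Type*} [NormedAddCommGroup X] [InnerProductSpace ℝ X]
    (I : Set ℝ) (hI : I.OrdConnected)
    (A : ℝ → X →L[ℝ] X) (hA : ContinuousOn A I)
    (x : ℝ → X) (hx : ∀ t ∈ I, HasDerivWithinAt x (A t (x t)) I t)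
    (t₀ t : ℝ) (ht₀ : t₀ ∈ I) (ht : t ∈ I) (htt₀ : t₀ ≤ t) :
    ‖x t₀‖ * Real.exp (∫ τ in t₀..t, muMinus (A τ)) ≤ ‖x t‖ ∧
      ‖x t‖ ≤ ‖x t₀‖ * Real.exp (∫ τ in t₀..t, muPlus (A τ)) := by
  have h_sub : Icc t₀ t ⊆ I := hI.out ht₀ ht
  have hA_Icc : ContinuousOn A (Icc t₀ t) := hA.mono h_sub
  have hx_cont : ContinuousOn x (Icc t₀ t) := fun s hs ↦
    (hx s (h_sub hs)).continuousWithinAt.mono h_sub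
  have hx_deriv : ∀ s ∈ Ioo t₀ t, HasDerivAt x (A s (x s)) s := fun s hs ↦
    (hx s (h_sub (Ioo_subset_Icc_self hs))).hasDerivAt
      (Filter.mem_of_superset (Icc_mem_nhds hs.1 hs.2) h_sub)
  constructor
  · exact mul_exp_integral_le_norm_of_le_inner_deriv htt₀
      (lipschitzWith_muMinus.continuous.comp_continuousOn hA_Icc) hx_cont hx_deriv
      fun s _ ↦ muMinus_mul_sq_le_inner_apply_self (A s) (x s)
  · exact norm_le_mul_exp_integral_of_inner_deriv_le htt₀
      (lipschitzWith_muPlus.continuous.comp_continuousOn hA_Icc) hx_cont hx_deriv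
      fun s _ ↦ inner_apply_self_le_muPlus_mul_sq (A s) (x s)

/-- **Ważewski's inequality.** Let `X` be a real Hilbert space, `I ⊆ ℝ` an
interval, `A : I → 𝓛(X,X)` continuous, and `x : I → X` a solution of `ẋ = A(t)x`.  Then for all
`t, t₀ ∈ I` with `t ≥ t₀`,
`‖x(t₀)‖·exp(∫_{t₀}^t μ₋(A(τ)) dτ) ≤ ‖x(t)‖ ≤ ‖x(t₀)‖·exp(∫_{t₀}^t μ₊(A(τ)) dτ)`. -/
theorem stmt_1 {X : Type*} [NormedAddCommGroup X] [InnerProductSpace ℝ X] [CompleteSpace X]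
    (I : Set ℝ) (hI : I.OrdConnected)
    (A : ℝ → X →L[ℝ] X) (hA : ContinuousOn A I)
    (x : ℝ → X) (hx : ∀ t ∈ I, HasDerivWithinAt x (A t (x t)) I t)
    (t₀ t : ℝ) (ht₀ : t₀ ∈ I) (ht : t ∈ I) (htt₀ : t₀ ≤ t) :
    ‖x t₀‖ * Real.exp (∫ τ in t₀..t, muMinus (A τ)) ≤ ‖x t‖ ∧
      ‖x t‖ ≤ ‖x t₀‖ * Real.exp (∫ τ in t₀..t, muPlus (A τ)) :=
  stmt_1_general I hI A hA x hx t₀ t ht₀ ht htt₀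
end

section
/- Let X be a real Banach space, U ⊆ X open, g : U → ℝ continuous and a C^{1,1}-submersion on its zero set, and suppose Ω = {x ∈ U : g(x) ≤ 0} is closed and connected. Let 𝒟² be any one of the four generalized second-order directional derivative operators D̲²₊, D̲²₋, D̄²₊, D̄²₋. Then Ω is convex if and only if 𝒟²g(x,h²) ≥ 0 for all x ∈ ∂Ω and all h ∈ ker g'(x). -/
open Filter Topology Metric

/-- Lower right generalized second-order directional derivative
`D̲²₊f(x,h,k) = liminf_{t↓0} (f'(x+th)k − f'(x)k)/t`. -/
noncomputable def lowD2p {X : Type*} [NormedAddCommGroup X] [NormedSpace ℝ X]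
    (f : X → ℝ) (x h k : X) : ℝ :=
  liminf (fun t : ℝ => (fderiv ℝ f (x + t • h) k - fderiv ℝ f x k) / t) (𝓝[>] (0:ℝ))

/-- Upper right generalized second-order directional derivative. -/
noncomputable def upD2p {X : Type*} [NormedAddCommGroup X] [NormedSpace ℝ X]
    (f : X → ℝ) (x h k : X) : ℝ :=
  limsup (fun t : ℝ => (fderiv ℝ f (x + t • h) k - fderiv ℝ f x k) / t) (𝓝[>] (0:ℝ))

/-- Lower left generalized second-order directional derivative. -/
noncomputable def lowD2m {X : Type*} [NormedAddCommGroup X] [NormedSpace ℝ X]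
    (f : X → ℝ) (x h k : X) : ℝ :=
  liminf (fun t : ℝ => (fderiv ℝ f (x + t • h) k - fderiv ℝ f x k) / t) (𝓝[<] (0:ℝ))

/-- Upper left generalized second-order directional derivative. -/
noncomputable def upD2m {X : Type*} [NormedAddCommGroup X] [NormedSpace ℝ X]
    (f : X → ℝ) (x h k : X) : ℝ :=
  limsup (fun t : ℝ => (fderiv ℝ f (x + t • h) k - fderiv ℝ f x k) / t) (𝓝[<] (0:ℝ))

/-- `g` is a `C^{1,1}`-submersion on its zero set: on a neighborhood of each point of
`g⁻¹(0) ∩ U`, `g` is `C¹` with Lipschitz-continuous derivative, and `g'(x) ≠ 0` at each such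
point. -/
def IsC11SubmersionOnZeroSet {X : Type*} [NormedAddCommGroup X] [NormedSpace ℝ X]
    (g : X → ℝ) (U : Set X) : Prop :=
  ∀ x ∈ U, g x = 0 →
    (∃ ε > 0, ball x ε ⊆ U ∧ ContDiffOn ℝ 1 g (ball x ε) ∧
      ∃ L : NNReal, LipschitzOnWith L (fun y => fderiv ℝ g y) (ball x ε)) ∧
    fderiv ℝ g x ≠ 0

/-!
Near each of its zeros, `g` grows at unit rate along some direction `v`, so `∂Ω` is a graph over a
hyperplane. If `Ω` is convex and `h` is tangent at `x`, then `x + t • h` lies outside `{g < 0}`, at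
distance `o(t)` from a zero of `g`; the supporting hyperplane there bounds `g' (x + t • h) h` from
below by `-o(t)`, since `g'` is Lipschitz.

Conversely, the plane through a boundary point spanned by a direction `h` and by `v` meets `∂Ω` in
a curve `x + t • h + ψ t • v`, and the second-order condition says that a Dini derivative of `ψ'` is
nonpositive. If the line lies in `Ω` near the point, then `ψ ≥ 0`, hence `ψ = 0` to the right of
the point. So a segment in `Ω` that touches `∂Ω` never leaves it again, and segments in `Ω` between
points of `{g < 0}` stay in `{g < 0}`. This open set is dense in `Ω` and connected, so it is convex
as soon as visibility from each of its points is both an open and a closed condition in it.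
-/

section Topology

lemma isPreconnected_of_closure_of_locally_joinedIn {E : Type*} [TopologicalSpace E] {G : Set E}
    (hG : IsPreconnected (closure G))
    (hloc : ∀ p ∈ closure G, ∃ N ∈ 𝓝 p, ∀ a ∈ N ∩ G, ∀ b ∈ N ∩ G, JoinedIn G a b) :
    IsPreconnected G := by
  rw [isPreconnected_iff_subset_of_disjoint]
  intro u v hu hv hcover hdisj
  by_contra! hnot
  obtain ⟨⟨b, hbG, hbu⟩, ⟨a, haG, hav⟩⟩ :=
    And.intro (Set.not_subset.1 hnot.1) (Set.not_subset.1 hnot.2)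
  have hclosure : closure G ⊆ closure (G ∩ u) ∪ closure (G ∩ v) := by
    rw [← closure_union, ← Set.inter_union_distrib_left, Set.inter_eq_left.2 hcover]
  obtain ⟨p, hp, hpu, hpv⟩ := isPreconnected_closed_iff.1 hG _ _ isClosed_closure isClosed_closure
    hclosure ⟨a, subset_closure haG, subset_closure ⟨haG, (hcover haG).resolve_right hav⟩⟩
    ⟨b, subset_closure hbG, subset_closure ⟨hbG, (hcover hbG).resolve_left hbu⟩⟩
  obtain ⟨N, hN, hjoin⟩ := hloc p hp
  obtain ⟨c, hcN, hcG, hcu⟩ := mem_closure_iff_nhds.1 hpu N hN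
  obtain ⟨d, hdN, hdG, hdv⟩ := mem_closure_iff_nhds.1 hpv N hN
  obtain ⟨z, hz, hzuv⟩ := (isPathConnected_pathComponentIn hcG).isConnected.isPreconnected u v hu hv
    (pathComponentIn_subset.trans hcover) ⟨c, mem_pathComponentIn_self hcG, hcu⟩
    ⟨d, hjoin c ⟨hcN, hcG⟩ d ⟨hdN, hdG⟩, hdv⟩
  exact hdisj.subset ⟨pathComponentIn_subset hz, hzuv⟩

variable {E : Type*} [AddCommGroup E] [Module ℝ E] [TopologicalSpace E]
  [IsTopologicalAddGroup E] [ContinuousSMul ℝ E]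

lemma isOpen_setOf_segment_subset {G : Set E} (hG : IsOpen G) (x : E) :
    IsOpen {y | segment ℝ x y ⊆ G} := by
  simp only [isOpen_iff_eventually, segment_eq_image', Set.image_subset_iff]
  intro y hy
  refine isCompact_Icc.eventually_forall_of_forall_eventually fun t ht => ?_
  have hcont : Continuous fun p : E × ℝ => x + p.2 • (p.1 - x) := by fun_prop
  exact hcont.continuousAt.eventually (hG.mem_nhds (hy ht))

lemma isClosed_setOf_segment_subset {C : Set E} (hC : IsClosed C) (x : E) :
    IsClosed {y | segment ℝ x y ⊆ C} := by
  have hinter : {y | segment ℝ x y ⊆ C} =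
      ⋂ t ∈ Set.Icc (0 : ℝ) 1, (fun y => x + t • (y - x)) ⁻¹' C := by
    ext y
    rw [Set.mem_ofPred_eq, segment_eq_image', Set.image_subset_iff, Set.mem_iInter₂]
    rfl
  rw [hinter]
  exact isClosed_biInter fun t _ => hC.preimage (by fun_prop)

-- The points of `G` visible from `x` within `G` are those visible within `closure G`, so they form
-- a clopen part of `G`.
lemma convex_of_isOpen_of_isPreconnected {G : Set E} (hG : IsOpen G) (hconn : IsPreconnected G)
    (hseg : ∀ x ∈ G, ∀ y ∈ G, segment ℝ x y ⊆ closure G → segment ℝ x y ⊆ G) : Convex ℝ G := by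
  rw [convex_iff_segment_subset]
  intro x hx
  have hdisj : Disjoint {y | segment ℝ x y ⊆ G} {y | segment ℝ x y ⊆ closure G}ᶜ :=
    Set.disjoint_compl_right_iff_subset.2 fun y hy => hy.trans subset_closure
  have hcover : G ⊆ {y | segment ℝ x y ⊆ G} ∪ {y | segment ℝ x y ⊆ closure G}ᶜ := fun y hy =>
    or_iff_not_imp_right.2 fun hvis => hseg x hx y hy (not_not.1 hvis)
  have hself : segment ℝ x x ⊆ G := by
    rwa [segment_same, Set.singleton_subset_iff]
  exact hconn.subset_left_of_subset_union (isOpen_setOf_segment_subset hG x)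
    (isClosed_setOf_segment_subset isClosed_closure x).isOpen_compl hdisj hcover ⟨x, hx, hself⟩

end Topology

section SecondOrder

variable {X : Type*} [NormedAddCommGroup X] [NormedSpace ℝ X] {f : X → ℝ} {x : X} {L : NNReal}
  {B : Set X}

lemma tendsto_add_smul_nhds (x h : X) : Tendsto (fun t : ℝ => x + t • h) (𝓝 0) (𝓝 x) := by
  have hcont : Continuous fun t : ℝ => x + t • h := by fun_prop
  simpa only [zero_smul, add_zero] using hcont.tendsto 0

lemma lipschitzOnWith_fderiv_apply (hf : LipschitzOnWith L (fderiv ℝ f) B) (k : X) :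
    LipschitzOnWith (L * ‖k‖₊) (fun y => fderiv ℝ f y k) B := by
  refine LipschitzOnWith.of_dist_le_mul fun y hy z hz => ?_
  rw [dist_eq_norm, dist_eq_norm, ← sub_apply]
  calc ‖(fderiv ℝ f y - fderiv ℝ f z) k‖ ≤ ‖fderiv ℝ f y - fderiv ℝ f z‖ * ‖k‖ :=
        ContinuousLinearMap.le_opNorm _ _
    _ ≤ L * ‖y - z‖ * ‖k‖ := by gcongr; exact hf.norm_sub_le hy hz
    _ = ↑(L * ‖k‖₊) * ‖y - z‖ := by push_cast; ring

lemma isBoundedUnder_abs_fderiv_quotient (hf : LipschitzOnWith L (fderiv ℝ f) B) (hB : B ∈ 𝓝 x)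
    (h k : X) : (𝓝[>] (0 : ℝ)).IsBoundedUnder (· ≤ ·)
      fun t => |(fderiv ℝ f (x + t • h) k - fderiv ℝ f x k) / t| := by
  refine isBoundedUnder_of_eventually_le (a := L * ‖k‖ * ‖h‖) ?_
  filter_upwards [nhdsWithin_le_nhds ((tendsto_add_smul_nhds x h).eventually_mem hB),
    self_mem_nhdsWithin] with t htB (ht : 0 < t)
  have hlip := (lipschitzOnWith_fderiv_apply hf k).norm_sub_le htB (mem_of_mem_nhds hB)
  rw [add_sub_cancel_left, norm_smul, Real.norm_of_nonneg ht.le, Real.norm_eq_abs] at hlip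
  rw [abs_div, abs_of_pos ht, div_le_iff₀ ht]
  calc _ ≤ ↑(L * ‖k‖₊) * (t * ‖h‖) := hlip
    _ = L * ‖k‖ * ‖h‖ * t := by push_cast; ring

lemma lowD2p_le_upD2p (hf : LipschitzOnWith L (fderiv ℝ f) B) (hB : B ∈ 𝓝 x) (h k : X) :
    lowD2p f x h k ≤ upD2p f x h k :=
  have hbdd := isBoundedUnder_le_abs.1 (isBoundedUnder_abs_fderiv_quotient hf hB h k)
  liminf_le_limsup hbdd.1 hbdd.2

lemma fderiv_quotient_neg (f : X → ℝ) (x h k : X) :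
    (fun t : ℝ => (fderiv ℝ f (x + t • h) k - fderiv ℝ f x k) / t) ∘ Neg.neg =
      fun t : ℝ => (fderiv ℝ f (x + t • -h) (-k) - fderiv ℝ f x (-k)) / t := by
  ext t
  simp only [Function.comp_apply, neg_smul, smul_neg, map_neg]
  ring

lemma map_neg_nhdsGT_zero : map Neg.neg (𝓝[>] (0 : ℝ)) = 𝓝[<] 0 :=
  neg_nhdsGT.trans (by rw [neg_zero])

lemma lowD2m_eq_lowD2p_neg (f : X → ℝ) (x h k : X) : lowD2m f x h k = lowD2p f x (-h) (-k) := by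
  rw [lowD2m, lowD2p, ← map_neg_nhdsGT_zero, ← liminf_comp, fderiv_quotient_neg]

lemma upD2m_eq_upD2p_neg (f : X → ℝ) (x h k : X) : upD2m f x h k = upD2p f x (-h) (-k) := by
  rw [upD2m, upD2p, ← map_neg_nhdsGT_zero, ← limsup_comp, fderiv_quotient_neg]

variable {D : (X → ℝ) → X → X → X → ℝ}

lemma min_lowD2p_neg_le (hf : LipschitzOnWith L (fderiv ℝ f) B) (hB : B ∈ 𝓝 x)
    (hD : D = lowD2p ∨ D = upD2p ∨ D = lowD2m ∨ D = upD2m) (h : X) :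
    min (lowD2p f x h h) (lowD2p f x (-h) (-h)) ≤ D f x h h := by
  rcases hD with rfl | rfl | rfl | rfl
  · exact min_le_left _ _
  · exact (min_le_left _ _).trans (lowD2p_le_upD2p hf hB h h)
  · exact (min_le_right _ _).trans_eq (lowD2m_eq_lowD2p_neg f x h h).symm
  · rw [upD2m_eq_upD2p_neg]
    exact (min_le_right _ _).trans (lowD2p_le_upD2p hf hB (-h) (-h))

lemma min_neg_le_upD2p (hf : LipschitzOnWith L (fderiv ℝ f) B) (hB : B ∈ 𝓝 x)
    (hD : D = lowD2p ∨ D = upD2p ∨ D = lowD2m ∨ D = upD2m) (h : X) :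
    min (D f x h h) (D f x (-h) (-h)) ≤ upD2p f x h h := by
  rcases hD with rfl | rfl | rfl | rfl
  · exact (min_le_left _ _).trans (lowD2p_le_upD2p hf hB h h)
  · exact min_le_left _ _
  · rw [lowD2m_eq_lowD2p_neg f x (-h), neg_neg]
    exact (min_le_right _ _).trans (lowD2p_le_upD2p hf hB h h)
  · rw [upD2m_eq_upD2p_neg f x (-h), neg_neg]
    exact min_le_right _ _

lemma lowD2p_nonneg_of_eventually_le (hf : LipschitzOnWith L (fderiv ℝ f) B) (hB : B ∈ 𝓝 x)
    {h k : X} {b : ℝ → ℝ} (hb : Tendsto b (𝓝[>] 0) (𝓝 0))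
    (hle : ∀ᶠ t in 𝓝[>] (0 : ℝ), b t ≤ (fderiv ℝ f (x + t • h) k - fderiv ℝ f x k) / t) :
    0 ≤ lowD2p f x h k := by
  have hbdd := isBoundedUnder_le_abs.1 (isBoundedUnder_abs_fderiv_quotient hf hB h k)
  rw [← hb.liminf_eq]
  exact liminf_le_liminf hle hb.isBoundedUnder_ge hbdd.1.isCoboundedUnder_ge

lemma frequently_neg_mul_lt_of_upD2p_nonneg (hf : LipschitzOnWith L (fderiv ℝ f) B) (hB : B ∈ 𝓝 x)
    {h k : X} (hD : 0 ≤ upD2p f x h k) {c : ℝ} (hc : 0 < c) :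
    ∃ᶠ t in 𝓝[>] (0 : ℝ), -(c * t) < fderiv ℝ f (x + t • h) k - fderiv ℝ f x k := by
  have hbdd := isBoundedUnder_le_abs.1 (isBoundedUnder_abs_fderiv_quotient hf hB h k)
  have hfreq := frequently_lt_of_lt_limsup hbdd.2.isCoboundedUnder_le
    ((neg_neg_of_pos hc).trans_le hD)
  refine (hfreq.and_eventually self_mem_nhdsWithin).mono ?_
  rintro t ⟨hlt, ht : 0 < t⟩
  rwa [lt_div_iff₀ ht, neg_mul] at hlt

lemma fderiv_curve_sub_tangent_isLittleO {q : ℝ → X} {t : ℝ} {q' : X}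
    (hf : LipschitzOnWith L (fderiv ℝ f) B) (hB : B ∈ 𝓝 (q t)) (hq : HasDerivAt q q' t) (k : X) :
    (fun τ : ℝ => fderiv ℝ f (q (t + τ)) k - fderiv ℝ f (q t + τ • q') k) =o[𝓝 0]
      fun τ => τ := by
  have hcurve : ∀ᶠ τ in 𝓝 (0 : ℝ), q (t + τ) ∈ B := by
    refine Tendsto.eventually_mem ?_ hB
    simpa only [Function.comp_def, add_zero] using hq.continuousAt.tendsto.comp
      (by simpa only [add_zero] using (continuous_const_add t).tendsto 0)
  refine (Asymptotics.IsBigO.of_bound ↑(L * ‖k‖₊) ?_).trans_isLittleO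
    (hasDerivAt_iff_isLittleO_nhds_zero.1 hq)
  filter_upwards [hcurve, (tendsto_add_smul_nhds (q t) q').eventually_mem hB] with τ hτq hτl
  simpa only [sub_sub] using (lipschitzOnWith_fderiv_apply hf k).norm_sub_le hτq hτl

lemma frequently_neg_mul_lt_fderiv_along_curve {q : ℝ → X} {t : ℝ} {k : X}
    (hf : LipschitzOnWith L (fderiv ℝ f) B) (hB : B ∈ 𝓝 (q t)) (hq : HasDerivAt q k t)
    (hD : 0 ≤ upD2p f (q t) k k) {ρ : ℝ} (hρ : 0 < ρ) :
    ∃ᶠ s in 𝓝[>] t, -(ρ * (s - t)) < fderiv ℝ f (q s) k - fderiv ℝ f (q t) k := by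
  have hclose : ∀ᶠ τ in 𝓝[>] (0 : ℝ),
      ‖fderiv ℝ f (q (t + τ)) k - fderiv ℝ f (q t + τ • k) k‖ ≤ ρ / 2 * ‖τ‖ :=
    nhdsWithin_le_nhds ((fderiv_curve_sub_tangent_isLittleO hf hB hq k).bound (half_pos hρ))
  have htangent := frequently_neg_mul_lt_of_upD2p_nonneg hf hB hD (half_pos hρ)
  rw [← add_zero t, ← map_add_left_nhdsGT, frequently_map, add_zero]
  refine (htangent.and_eventually (hclose.and self_mem_nhdsWithin)).mono ?_
  rintro τ ⟨hlt, hdist, hτ : 0 < τ⟩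
  rw [Real.norm_of_nonneg hτ.le, Real.norm_eq_abs] at hdist
  rw [add_sub_cancel_left]
  linarith [(abs_le.1 hdist).1]

end SecondOrder

section Sublevel

lemma isOpen_setOf_lt_zero {E : Type*} [TopologicalSpace E] {g : E → ℝ} {U : Set E}
    (hU : IsOpen U) (hg : ContinuousOn g U) : IsOpen {x ∈ U | g x < 0} :=
  hg.isOpen_inter_preimage hU isOpen_Iio

lemma setOf_lt_zero_subset_setOf_le_zero {E : Type*} {g : E → ℝ} {U : Set E} :
    {x ∈ U | g x < 0} ⊆ {x ∈ U | g x ≤ 0} :=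
  fun _ hx => ⟨hx.1, hx.2.le⟩

variable {X : Type*} [NormedAddCommGroup X] [NormedSpace ℝ X] {g : X → ℝ} {U B : Set X}
  {x v : X} {L : NNReal}

/-- The second-order convexity condition on the part of the zero set of `g` lying in `S`, stated
with the upper right derivative, which gives the weakest of the four variants of the condition. -/
def IsTangentiallyConvexOn (g : X → ℝ) (S : Set X) : Prop :=
  ∀ x ∈ S, g x = 0 → ∀ k : X, fderiv ℝ g x k = 0 → 0 ≤ upD2p g x k k

lemma IsTangentiallyConvexOn.mono {S T : Set X} (hT : IsTangentiallyConvexOn g T) (hST : S ⊆ T) :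
    IsTangentiallyConvexOn g S :=
  fun x hx => hT x (hST hx)

/-- `B` is a region on which `g` has regularity `C^{1,1}` and its level sets are graphs over a
hyperplane transverse to `v`. The growth rate of `g` along `v` is normalized to be at least `1`. -/
structure IsTransversalOn (g : X → ℝ) (L : NNReal) (v : X) (B : Set X) : Prop where
  isOpen : IsOpen B
  convex : Convex ℝ B
  contDiffOn : ContDiffOn ℝ 1 g B
  lipschitzOnWith : LipschitzOnWith L (fderiv ℝ g) B
  one_le_fderiv : ∀ y ∈ B, 1 ≤ fderiv ℝ g y v

lemma exists_isTransversalOn (hg : IsC11SubmersionOnZeroSet g U) (hx : x ∈ U) (hgx : g x = 0) :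
    ∃ L v B, x ∈ B ∧ B ⊆ U ∧ IsTransversalOn g L v B := by
  obtain ⟨⟨ε, hε, hεU, hcd, L, hL⟩, hne⟩ := hg x hx hgx
  obtain ⟨w, hw⟩ : ∃ w, fderiv ℝ g x w ≠ 0 := by
    by_contra! hzero
    exact hne (ContinuousLinearMap.ext hzero)
  set v := (2 / fderiv ℝ g x w) • w with hv
  have htwo : fderiv ℝ g x v = 2 := by
    rw [hv, map_smul, smul_eq_mul, div_mul_cancel₀ _ hw]
  have hcont : ContinuousAt (fun y => fderiv ℝ g y v) x :=
    (lipschitzOnWith_fderiv_apply hL v).continuousOn.continuousAt (ball_mem_nhds x hε)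
  obtain ⟨δ, hδ, hδv⟩ := eventually_nhds_iff_ball.1
    (hcont.eventually_const_lt (show (1 : ℝ) < fderiv ℝ g x v by rw [htwo]; exact one_lt_two))
  have hsub : ball x (min ε δ) ⊆ ball x ε := ball_subset_ball (min_le_left ε δ)
  exact ⟨L, v, ball x (min ε δ), mem_ball_self (lt_min hε hδ), hsub.trans hεU, isOpen_ball,
    convex_ball x _, hcd.mono hsub, hL.mono hsub,
    fun y hy => (hδv y (ball_subset_ball (min_le_right ε δ) hy)).le⟩

namespace IsTransversalOn

variable (hB : IsTransversalOn g L v B)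
include hB

lemma mem_nhds (hx : x ∈ B) : B ∈ 𝓝 x :=
  hB.isOpen.mem_nhds hx

lemma contDiffAt (hx : x ∈ B) : ContDiffAt ℝ 1 g x :=
  hB.contDiffOn.contDiffAt (hB.mem_nhds hx)

lemma hasFDerivAt (hx : x ∈ B) : HasFDerivAt g (fderiv ℝ g x) x :=
  ((hB.contDiffAt hx).differentiableAt one_ne_zero).hasFDerivAt

lemma continuousOn : ContinuousOn g B :=
  hB.contDiffOn.continuousOn

lemma add_le_apply_add_smul {s : ℝ} (hx : x ∈ B) (hs : 0 ≤ s) (hxs : x + s • v ∈ B) :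
    g x + s ≤ g (x + s • v) := by
  obtain ⟨z, hz, hmvt⟩ := domain_mvt (fun y hy => (hB.hasFDerivAt hy).hasFDerivWithinAt) hB.convex
    hx hxs
  rw [add_sub_cancel_left, map_smul, smul_eq_mul] at hmvt
  nlinarith [hB.one_le_fderiv z (hB.convex.segment_subset hx hxs hz)]

lemma apply_sub_smul_le {s : ℝ} (hx : x ∈ B) (hs : 0 ≤ s) (hxs : x - s • v ∈ B) :
    g (x - s • v) ≤ g x - s := by
  have hle := hB.add_le_apply_add_smul hxs hs (by rwa [sub_add_cancel])
  rw [sub_add_cancel] at hle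
  linarith

lemma sub_smul_mem {s r : ℝ} (hx : x ∈ B) (hxr : x - r • v ∈ B) (hs : s ∈ Set.Icc 0 r) :
    x - s • v ∈ B := by
  rcases (hs.1.trans hs.2).eq_or_lt with rfl | hr
  · rwa [le_antisymm hs.2 hs.1]
  · have hmem := hB.convex.add_smul_sub_mem hx hxr (t := s / r)
      ⟨div_nonneg hs.1 hr.le, (div_le_one hr).2 hs.2⟩
    rwa [sub_sub_cancel_left, smul_neg, smul_smul, div_mul_cancel₀ _ hr.ne', ← sub_eq_add_neg]
      at hmem

lemma exists_zero_sub_smul (hx : x ∈ B) (hgx : 0 ≤ g x) (hxg : x - g x • v ∈ B) :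
    ∃ s ∈ Set.Icc 0 (g x), x - s • v ∈ B ∧ g (x - s • v) = 0 := by
  have hcont : ContinuousOn (fun s : ℝ => g (x - s • v)) (Set.Icc 0 (g x)) :=
    hB.continuousOn.comp (by fun_prop) fun s hs => hB.sub_smul_mem hx hxg hs
  have hend : g (x - g x • v) ≤ 0 := by
    simpa only [sub_self] using hB.apply_sub_smul_le hx hgx hxg
  obtain ⟨s, hs, hzero⟩ := intermediate_value_Icc' hgx hcont
    (show (0 : ℝ) ∈ _ from ⟨hend, by simpa only [zero_smul, sub_zero] using hgx⟩)
  exact ⟨s, hs, hB.sub_smul_mem hx hxg hs, hzero⟩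

end IsTransversalOn

/-! ### Necessity -/

lemma fderiv_sub_nonpos_of_convex (hconv : Convex ℝ {x ∈ U | g x ≤ 0}) (hx : x ∈ U)
    (hgx : g x = 0) (hd : DifferentiableAt ℝ g x) {z : X} (hz : z ∈ {x ∈ U | g x ≤ 0}) :
    fderiv ℝ g x (z - x) ≤ 0 := by
  have hmax : IsLocalMaxOn g {x ∈ U | g x ≤ 0} x :=
    eventually_nhdsWithin_of_forall fun y hy => hy.2.trans_eq hgx.symm
  exact hmax.hasFDerivWithinAt_nonpos hd.hasFDerivAt.hasFDerivWithinAt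
    (sub_mem_posTangentConeAt_of_segment_subset (hconv.segment_subset ⟨hx, hgx.le⟩ hz))

lemma fderiv_sub_neg_of_convex (hU : IsOpen U) (hg : ContinuousOn g U)
    (hconv : Convex ℝ {x ∈ U | g x ≤ 0}) (hx : x ∈ U) (hgx : g x = 0) (hne : fderiv ℝ g x ≠ 0)
    {z : X} (hz : z ∈ {x ∈ U | g x < 0}) : fderiv ℝ g x (z - x) < 0 := by
  have hd : DifferentiableAt ℝ g x := by_contra fun h => hne (fderiv_zero_of_not_differentiableAt h)
  have hle : ∀ᶠ y in 𝓝 z, fderiv ℝ g x (y - x) ≤ 0 := by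
    filter_upwards [(isOpen_setOf_lt_zero hU hg).mem_nhds hz] with y hy
    exact fderiv_sub_nonpos_of_convex hconv hx hgx hd (setOf_lt_zero_subset_setOf_le_zero hy)
  refine hle.self_of_nhds.lt_of_ne fun hzero => hne ?_
  have hmax : IsLocalMax (fun y => fderiv ℝ g x (y - x)) z :=
    hle.mono fun y hy => hy.trans_eq hzero.symm
  exact hmax.hasFDerivAt_eq_zero
    ((fderiv ℝ g x).hasFDerivAt.comp z ((hasFDerivAt_id z).sub_const x))

-- The tangent ray stays outside the sublevel set; pushing `x + t • h` down along `-v` by some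
-- `s ≤ g (x + t • h)` reaches a zero `y`, and the supporting inequality at `y` towards `x` gives
-- `0 ≤ fderiv ℝ g y h`.
lemma IsTransversalOn.neg_mul_le_fderiv_of_convex (hB : IsTransversalOn g L v B) (hBU : B ⊆ U)
    (hconv : Convex ℝ {x ∈ U | g x ≤ 0}) (hx : x ∈ B) (hgx : g x = 0) {h : X} {t : ℝ} (ht : 0 < t)
    (hxt : x + t • h ∈ B) (hgt : 0 ≤ g (x + t • h)) (hpush : x + t • h - g (x + t • h) • v ∈ B) :
    -(L * ‖h‖ * ‖v‖ * g (x + t • h)) ≤ fderiv ℝ g (x + t • h) h := by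
  obtain ⟨s, ⟨hs, hsg⟩, hyB, hgy⟩ := hB.exists_zero_sub_smul hxt hgt hpush
  set y := x + t • h - s • v with hy
  have hsupport : fderiv ℝ g y (x - y) ≤ 0 := fderiv_sub_nonpos_of_convex hconv (hBU hyB) hgy
    (hB.hasFDerivAt hyB).differentiableAt ⟨hBU hx, hgx.le⟩
  have hsub : x - y = s • v - t • h := by
    rw [hy]
    abel
  rw [hsub, map_sub, map_smul, map_smul, smul_eq_mul, smul_eq_mul, sub_nonpos] at hsupport
  have hyh : 0 ≤ fderiv ℝ g y h := by
    have hsv := mul_nonneg hs (zero_le_one.trans (hB.one_le_fderiv y hyB))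
    exact nonneg_of_mul_nonneg_right (hsv.trans hsupport) ht
  have hlip := (lipschitzOnWith_fderiv_apply hB.lipschitzOnWith h).norm_sub_le hxt hyB
  rw [hy, sub_sub_cancel, norm_smul, Real.norm_of_nonneg hs, ← hy, Real.norm_eq_abs] at hlip
  have hbound : ↑(L * ‖h‖₊) * (s * ‖v‖) ≤ L * ‖h‖ * ‖v‖ * g (x + t • h) := by
    push_cast
    calc L * ‖h‖ * (s * ‖v‖) = L * ‖h‖ * ‖v‖ * s := by ring
      _ ≤ _ := by gcongr
  linarith [(abs_le.1 hlip).1]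

lemma lowD2p_nonneg_of_convex (hU : IsOpen U) (hg : ContinuousOn g U)
    (hgs : IsC11SubmersionOnZeroSet g U) (hconv : Convex ℝ {x ∈ U | g x ≤ 0}) (hx : x ∈ U)
    (hgx : g x = 0) {h : X} (hh : fderiv ℝ g x h = 0) : 0 ≤ lowD2p g x h h := by
  obtain ⟨L, v, B, hxB, hBU, hB⟩ := exists_isTransversalOn hgs hx hgx
  have hline : Tendsto (fun t : ℝ => x + t • h) (𝓝 0) (𝓝 x) := tendsto_add_smul_nhds x h
  have hgline : Tendsto (fun t : ℝ => g (x + t • h)) (𝓝 0) (𝓝 0) := by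
    simpa only [Function.comp_def, hgx] using
      (hB.hasFDerivAt hxB).continuousAt.tendsto.comp hline
  have hpush : Tendsto (fun t : ℝ => x + t • h - g (x + t • h) • v) (𝓝 0) (𝓝 x) := by
    simpa only [zero_smul, sub_zero] using hline.sub (hgline.smul_const v)
  have hslope : Tendsto (fun t : ℝ => t⁻¹ * g (x + t • h)) (𝓝[>] 0) (𝓝 0) := by
    simpa only [zero_add, zero_smul, add_zero, hgx, sub_zero, smul_eq_mul, hh]
      using ((hB.hasFDerivAt hxB).hasLineDerivAt h).tendsto_slope_zero_right
  have hlower : Tendsto (fun t : ℝ => -(L * ‖h‖ * ‖v‖ * (t⁻¹ * g (x + t • h))))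
      (𝓝[>] 0) (𝓝 0) := by
    simpa only [mul_zero, neg_zero] using (hslope.const_mul (L * ‖h‖ * ‖v‖)).neg
  refine lowD2p_nonneg_of_eventually_le hB.lipschitzOnWith (hB.mem_nhds hxB) hlower ?_
  filter_upwards [nhdsWithin_le_nhds (hline.eventually_mem (hB.mem_nhds hxB)),
    nhdsWithin_le_nhds (hpush.eventually_mem (hB.mem_nhds hxB)), self_mem_nhdsWithin]
    with t htB htpush (ht : 0 < t)
  have hgt : 0 ≤ g (x + t • h) := by
    by_contra! hneg
    have hsupport := fderiv_sub_neg_of_convex hU hg hconv hx hgx (hgs x hx hgx).2 ⟨hBU htB, hneg⟩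
    rw [add_sub_cancel_left, map_smul, hh, smul_zero] at hsupport
    exact hsupport.false
  rw [hh, sub_zero, le_div_iff₀ ht]
  calc -(L * ‖h‖ * ‖v‖ * (t⁻¹ * g (x + t • h))) * t = -(L * ‖h‖ * ‖v‖ * g (x + t • h)) := by
        field_simp
    _ ≤ fderiv ℝ g (x + t • h) h :=
        hB.neg_mul_le_fderiv_of_convex hBU hconv hxB hgx ht htB hgt htpush


/-! ### Sufficiency -/

lemma exists_contDiffAt_graph (hg : ContDiffAt ℝ 1 g x) (hv : fderiv ℝ g x v ≠ 0) (h : X) :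
    ∃ ψ : ℝ → ℝ, ContDiffAt ℝ 1 ψ 0 ∧ ψ 0 = 0 ∧
      ∀ᶠ t in 𝓝 (0 : ℝ), g (x + t • h + ψ t • v) = g x := by
  obtain ⟨A, hA⟩ : ∃ A : ℝ × ℝ →L[ℝ] X, ∀ z, A z = z.1 • h + z.2 • v :=
    ⟨(ContinuousLinearMap.fst ℝ ℝ ℝ).smulRight h + (ContinuousLinearMap.snd ℝ ℝ ℝ).smulRight v,
      fun _ => rfl⟩
  have hA0 : x + A (0, 0) = x := by
    rw [Prod.mk_zero_zero, map_zero, add_zero]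
  have hcd : ContDiffAt ℝ 1 (fun z => g (x + A z)) (0, 0) :=
    ContDiffAt.comp (0, 0) (hA0.symm ▸ hg) (contDiffAt_const.add A.contDiff.contDiffAt)
  have hfd : HasFDerivAt (fun z => g (x + A z)) ((fderiv ℝ g x).comp A) (0, 0) :=
    HasFDerivAt.comp (0, 0) (hA0.symm ▸ (hg.differentiableAt one_ne_zero).hasFDerivAt)
      (A.hasFDerivAt.const_add x)
  have hinv : (fderiv ℝ (fun z => g (x + A z)) (0, 0) ∘L .inr ℝ ℝ ℝ).IsInvertible := by
    refine ⟨ContinuousLinearEquiv.unitsEquivAut ℝ (Units.mk0 _ hv), ?_⟩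
    rw [hfd.fderiv]
    ext
    simp [hA]
  refine ⟨hcd.implicitFunction one_ne_zero hinv, hcd.contDiffAt_implicitFunction one_ne_zero hinv,
    hcd.implicitFunction_apply_self one_ne_zero hinv, ?_⟩
  filter_upwards [hcd.eventually_apply_implicitFunction one_ne_zero hinv] with t ht
  rwa [hA0, hA, ← add_assoc] at ht

/-- Over the parameters `T`, the graph `s ↦ x + s • h + ψ s • v` is a `C¹` arc of zeros of `g`
inside `B`: this describes the part of the zero set met by the plane through `x` spanned by the
direction `h` of a line and the transverse direction `v`. -/
structure IsZeroArcOn (g : X → ℝ) (B : Set X) (x h v : X) (ψ : ℝ → ℝ) (T : Set ℝ) : Prop where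
  isOpen : IsOpen T
  contDiffOn : ContDiffOn ℝ 1 ψ T
  mem : ∀ s ∈ T, x + s • h + ψ s • v ∈ B
  apply_eq_zero : ∀ s ∈ T, g (x + s • h + ψ s • v) = 0

lemma IsTransversalOn.exists_isZeroArcOn (hB : IsTransversalOn g L v B) (hx : x ∈ B)
    (hgx : g x = 0) (h : X) :
    ∃ ψ : ℝ → ℝ, ψ 0 = 0 ∧ ∃ b > 0, IsZeroArcOn g B x h v ψ (ball 0 b) := by
  obtain ⟨ψ, hψ, hψ0, hzero⟩ := exists_contDiffAt_graph (hB.contDiffAt hx)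
    (zero_lt_one.trans_le (hB.one_le_fderiv x hx)).ne' h
  have htendsto : Tendsto (fun s : ℝ => x + s • h + ψ s • v) (𝓝 0) (𝓝 x) := by
    simpa only [hψ0, zero_smul, add_zero] using
      (tendsto_add_smul_nhds x h).add (hψ.continuousAt.tendsto.smul_const v)
  obtain ⟨b, hb, hball⟩ := eventually_nhds_iff_ball.1
    ((hψ.eventually (by decide)).and (hzero.and (htendsto.eventually_mem (hB.mem_nhds hx))))
  exact ⟨ψ, hψ0, b, hb, isOpen_ball, fun s hs => (hball s hs).1.contDiffWithinAt,
    fun s hs => (hball s hs).2.2, fun s hs => (hball s hs).2.1.trans hgx⟩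

namespace IsZeroArcOn

variable {h : X} {ψ : ℝ → ℝ} {T : Set ℝ} {s t : ℝ}

lemma differentiableAt (hψ : IsZeroArcOn g B x h v ψ T) (ht : t ∈ T) : DifferentiableAt ℝ ψ t :=
  (hψ.contDiffOn.contDiffAt (hψ.isOpen.mem_nhds ht)).differentiableAt one_ne_zero

lemma hasDerivAt (hψ : IsZeroArcOn g B x h v ψ T) (ht : t ∈ T) :
    HasDerivAt (fun s : ℝ => x + s • h + ψ s • v) (h + deriv ψ t • v) t := by
  have hline : HasDerivAt (fun s : ℝ => x + s • h) h t := by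
    simpa only [one_smul] using ((hasDerivAt_id' t).smul_const h).const_add x
  exact hline.add ((hψ.differentiableAt ht).hasDerivAt.smul_const v)

lemma fderiv_tangent (hψ : IsZeroArcOn g B x h v ψ T) (hB : IsTransversalOn g L v B)
    (ht : t ∈ T) : fderiv ℝ g (x + t • h + ψ t • v) (h + deriv ψ t • v) = 0 := by
  have hzero : (fun s : ℝ => g (x + s • h + ψ s • v)) =ᶠ[𝓝 t] fun _ => (0 : ℝ) :=
    eventually_of_mem (hψ.isOpen.mem_nhds ht) hψ.apply_eq_zero
  exact ((hB.hasFDerivAt (hψ.mem t ht)).comp_hasDerivAt t (hψ.hasDerivAt ht)).unique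
    ((hasDerivAt_const t 0).congr_of_eventuallyEq hzero)

lemma fderiv_tangent_of_mem (hψ : IsZeroArcOn g B x h v ψ T) (hB : IsTransversalOn g L v B)
    (hs : s ∈ T) (t : ℝ) : fderiv ℝ g (x + s • h + ψ s • v) (h + deriv ψ t • v) =
      (deriv ψ t - deriv ψ s) * fderiv ℝ g (x + s • h + ψ s • v) v := by
  have htangent := hψ.fderiv_tangent hB hs
  simp only [map_add, map_smul, smul_eq_mul] at htangent ⊢
  linarith

lemma frequently_slope_deriv_lt (hψ : IsZeroArcOn g B x h v ψ T) (hB : IsTransversalOn g L v B)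
    (hconv : IsTangentiallyConvexOn g B) (ht : t ∈ T) {ρ : ℝ} (hρ : 0 < ρ) :
    ∃ᶠ s in 𝓝[>] t, slope (deriv ψ) t s < ρ := by
  have hD := hconv _ (hψ.mem t ht) (hψ.apply_eq_zero t ht) _ (hψ.fderiv_tangent hB ht)
  have hfreq := frequently_neg_mul_lt_fderiv_along_curve hB.lipschitzOnWith
    (hB.mem_nhds (hψ.mem t ht)) (hψ.hasDerivAt ht) hD hρ
  have hT : ∀ᶠ s in 𝓝[>] t, s ∈ T := nhdsWithin_le_nhds (hψ.isOpen.mem_nhds ht)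
  refine (hfreq.and_eventually (hT.and self_mem_nhdsWithin)).mono ?_
  rintro s ⟨hlt, hsT, hts : t < s⟩
  rw [hψ.fderiv_tangent hB ht, sub_zero, hψ.fderiv_tangent_of_mem hB hsT] at hlt
  rw [slope_def_field, div_lt_iff₀ (sub_pos.2 hts)]
  have hv := hB.one_le_fderiv _ (hψ.mem s hsT)
  have hpos := mul_pos hρ (sub_pos.2 hts)
  nlinarith

lemma antitoneOn (hψ : IsZeroArcOn g B x h v ψ T) (hB : IsTransversalOn g L v B)
    (hconv : IsTangentiallyConvexOn g B) (hst : Set.Icc s t ⊆ T) (hs : deriv ψ s ≤ 0) :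
    AntitoneOn ψ (Set.Icc s t) := by
  have hderiv : ∀ r ∈ Set.Icc s t, deriv ψ r ≤ 0 :=
    image_le_of_liminf_slope_right_le_deriv_boundary
      ((hψ.contDiffOn.continuousOn_deriv_of_isOpen hψ.isOpen le_rfl).mono hst) hs
      continuousOn_const (fun r _ => hasDerivWithinAt_const r _ 0)
      fun r hr _ hρ => hψ.frequently_slope_deriv_lt hB hconv (hst (Set.Ico_subset_Icc_self hr)) hρ
  exact antitoneOn_of_deriv_nonpos (convex_Icc s t) (hψ.contDiffOn.continuousOn.mono hst)
    (fun r hr => (hψ.differentiableAt (hst (interior_subset hr))).differentiableWithinAt)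
    fun r hr => hderiv r (interior_subset hr)

end IsZeroArcOn

-- Below the zero arc `ψ` through `x` the line lies in `{g ≤ 0}`, so `0` is a minimum of `ψ`; the
-- second-order condition makes `ψ` decrease to the right of `0`, hence `ψ` vanishes there.
lemma IsTransversalOn.eventually_eq_zero_of_eventually_nonpos (hB : IsTransversalOn g L v B)
    (hconv : IsTangentiallyConvexOn g B) (hx : x ∈ B) (hgx : g x = 0) {h : X}
    (hle : ∀ᶠ t in 𝓝 (0 : ℝ), g (x + t • h) ≤ 0) : ∀ᶠ t in 𝓝[>] (0 : ℝ), g (x + t • h) = 0 := by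
  obtain ⟨ψ, hψ0, b, hb, hψ⟩ := hB.exists_isZeroArcOn hx hgx h
  have hnonneg : ∀ᶠ t in 𝓝 (0 : ℝ), 0 ≤ ψ t := by
    filter_upwards [hle, (tendsto_add_smul_nhds x h).eventually_mem (hB.mem_nhds hx),
      ball_mem_nhds 0 hb] with t hgt htB htb
    by_contra! hneg
    have hpush := hB.apply_sub_smul_le htB (neg_nonneg.2 hneg.le)
      (by simpa only [neg_smul, sub_neg_eq_add] using hψ.mem t htb)
    rw [neg_smul, sub_neg_eq_add, hψ.apply_eq_zero t htb] at hpush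
    linarith
  have hmin : IsLocalMin ψ 0 := hnonneg.mono fun t ht => hψ0.trans_le ht
  filter_upwards [nhdsWithin_le_nhds hnonneg, Ioo_mem_nhdsGT hb] with t hψt ⟨ht, htb⟩
  have hsub : Set.Icc 0 t ⊆ ball 0 b := fun r hr => by
    rw [mem_ball_zero_iff, Real.norm_of_nonneg hr.1]
    exact hr.2.trans_lt htb
  have hanti := hψ.antitoneOn hB hconv hsub hmin.deriv_eq_zero.le
  have hψ_zero : ψ t = 0 := le_antisymm
    ((hanti ⟨le_rfl, ht.le⟩ ⟨ht.le, le_rfl⟩ ht.le).trans_eq hψ0) hψt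
  simpa only [hψ_zero, zero_smul, add_zero] using hψ.apply_eq_zero t (hsub ⟨ht.le, le_rfl⟩)

lemma eventually_nhdsGT_eq_zero_of_eventually_nonpos (hgs : IsC11SubmersionOnZeroSet g U)
    (hconv : IsTangentiallyConvexOn g U) {y h : X} {s : ℝ} (hs : y + s • h ∈ U)
    (hzero : g (y + s • h) = 0) (hle : ∀ᶠ t in 𝓝 s, g (y + t • h) ≤ 0) :
    ∀ᶠ t in 𝓝[>] s, g (y + t • h) = 0 := by
  obtain ⟨L, v, B, hsB, hBU, hB⟩ := exists_isTransversalOn hgs hs hzero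
  rw [← add_zero s, ← map_add_left_nhds, eventually_map] at hle
  rw [← add_zero s, ← map_add_left_nhdsGT, eventually_map]
  simp only [add_smul, ← add_assoc] at hle ⊢
  exact hB.eventually_eq_zero_of_eventually_nonpos (hconv.mono hBU) hsB hzero hle

lemma segment_subset_setOf_lt_zero (hg : ContinuousOn g U) (hgs : IsC11SubmersionOnZeroSet g U)
    (hconv : IsTangentiallyConvexOn g U) {y z : X} (hy : g y < 0) (hz : g z < 0)
    (hseg : segment ℝ y z ⊆ {x ∈ U | g x ≤ 0}) : segment ℝ y z ⊆ {x ∈ U | g x < 0} := by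
  rw [segment_eq_image', Set.image_subset_iff] at hseg ⊢
  intro t ht
  refine ⟨(hseg ht).1, (hseg ht).2.lt_of_ne fun hzero => ?_⟩
  have ht0 : t ≠ 0 := by
    rintro rfl
    exact hy.ne (by simpa only [zero_smul, add_zero] using hzero)
  have hcont : ContinuousOn (fun s : ℝ => g (y + s • (z - y))) (Set.Icc t 1) :=
    hg.comp (by fun_prop) fun s hs => (hseg ⟨ht.1.trans hs.1, hs.2⟩).1
  have hclosed : IsClosed ({s : ℝ | g (y + s • (z - y)) = 0} ∩ Set.Icc t 1) := by
    rw [Set.inter_comm]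
    exact hcont.preimage_isClosed_of_isClosed isClosed_Icc isClosed_singleton
  have hpropagate : Set.Icc t 1 ⊆ {s : ℝ | g (y + s • (z - y)) = 0} := by
    refine hclosed.Icc_subset_of_forall_mem_nhdsWithin hzero ?_
    rintro s ⟨hgs0 : g (y + s • (z - y)) = 0, hts, hs1⟩
    have hsmem : s ∈ Set.Ioo (0 : ℝ) 1 := ⟨(ht.1.lt_of_ne' ht0).trans_le hts, hs1⟩
    refine eventually_nhdsGT_eq_zero_of_eventually_nonpos hgs hconv
      (hseg (Set.Ioo_subset_Icc_self hsmem)).1 hgs0 ?_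
    filter_upwards [Icc_mem_nhds hsmem.1 hsmem.2] with r hr using (hseg hr).2
  have hone : g (y + (1 : ℝ) • (z - y)) = 0 := hpropagate ⟨ht.2, le_rfl⟩
  rw [one_smul, add_sub_cancel] at hone
  exact hz.ne hone

lemma closure_setOf_lt_zero (hgs : IsC11SubmersionOnZeroSet g U)
    (hcl : IsClosed {x ∈ U | g x ≤ 0}) : closure {x ∈ U | g x < 0} = {x ∈ U | g x ≤ 0} := by
  refine (closure_minimal setOf_lt_zero_subset_setOf_le_zero hcl).antisymm ?_
  rintro x ⟨hx, hgx⟩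
  rcases hgx.lt_or_eq with hneg | hzero
  · exact subset_closure ⟨hx, hneg⟩
  obtain ⟨L, v, B, hxB, hBU, hB⟩ := exists_isTransversalOn hgs hx hzero
  have hpush : Tendsto (fun t : ℝ => x - t • v) (𝓝 0) (𝓝 x) := by
    simpa only [smul_neg, ← sub_eq_add_neg] using tendsto_add_smul_nhds x (-v)
  refine mem_closure_of_tendsto (hpush.mono_left (nhdsWithin_le_nhds (s := Set.Ioi 0))) ?_
  filter_upwards [nhdsWithin_le_nhds (hpush.eventually_mem (hB.mem_nhds hxB)),
    self_mem_nhdsWithin] with t htB (ht : 0 < t)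
  have hle := hB.apply_sub_smul_le hxB ht.le htB
  exact ⟨hBU htB, by linarith⟩

lemma IsTransversalOn.joinedIn_sub_smul (hB : IsTransversalOn g L v B) (hx : x ∈ B)
    (hgx : g x < 0) {δ : ℝ} (hδ : 0 ≤ δ) (hxδ : x - δ • v ∈ B) :
    JoinedIn {y ∈ B | g y < 0} x (x - δ • v) := by
  refine JoinedIn.of_segment_subset ?_
  rw [segment_eq_image', Set.image_subset_iff]
  rintro θ ⟨hθ0, hθ1⟩
  have hθδ : 0 ≤ θ * δ := mul_nonneg hθ0 hδ
  have hmem := hB.sub_smul_mem hx hxδ ⟨hθδ, mul_le_of_le_one_left hδ hθ1⟩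
  have hle := hB.apply_sub_smul_le hx hθδ hmem
  rw [Set.mem_preimage, sub_sub_cancel_left, smul_neg, smul_smul, ← sub_eq_add_neg]
  exact ⟨hmem, by linarith⟩

-- Near a zero `x`, sliding by `-δ • v` moves the points of `{g < 0}` into a ball around `x - δ • v`
-- contained in `{g < 0}`.
lemma IsTransversalOn.exists_nhds_joinedIn (hB : IsTransversalOn g L v B) (hx : x ∈ B)
    (hgx : g x = 0) : ∃ N ∈ 𝓝 x, ∀ a ∈ N, ∀ b ∈ N, g a < 0 → g b < 0 →
      JoinedIn {y ∈ B | g y < 0} a b := by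
  have hpush : Tendsto (fun t : ℝ => x - t • v) (𝓝[>] 0) (𝓝 x) := by
    simpa only [smul_neg, ← sub_eq_add_neg] using
      (tendsto_add_smul_nhds x (-v)).mono_left nhdsWithin_le_nhds
  obtain ⟨δ, hδB, hδ : 0 < δ⟩ :=
    ((hpush.eventually_mem (hB.mem_nhds hx)).and self_mem_nhdsWithin).exists
  have hδg : g (x - δ • v) < 0 := by
    linarith [hB.apply_sub_smul_le hx hδ.le hδB]
  obtain ⟨ρ, hρ, hball⟩ := isOpen_iff.1 (isOpen_setOf_lt_zero hB.isOpen hB.continuousOn) _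
    ⟨hδB, hδg⟩
  have hslide : ContinuousAt (fun a : X => a - δ • v) x := by fun_prop
  refine ⟨B ∩ (fun a => a - δ • v) ⁻¹' ball (x - δ • v) ρ,
    inter_mem (hB.mem_nhds hx) (hslide.preimage_mem_nhds (ball_mem_nhds _ hρ)), ?_⟩
  rintro a ⟨haB, haδ⟩ b ⟨hbB, hbδ⟩ ha hb
  have hbottom : JoinedIn {y ∈ B | g y < 0} (a - δ • v) (b - δ • v) :=
    .of_segment_subset (((convex_ball _ ρ).segment_subset haδ hbδ).trans hball)
  exact ((hB.joinedIn_sub_smul haB ha hδ.le (hball haδ).1).trans hbottom).trans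
    (hB.joinedIn_sub_smul hbB hb hδ.le (hball hbδ).1).symm

lemma isPreconnected_setOf_lt_zero (hU : IsOpen U) (hg : ContinuousOn g U)
    (hgs : IsC11SubmersionOnZeroSet g U) (hcl : IsClosed {x ∈ U | g x ≤ 0})
    (hconn : IsPreconnected {x ∈ U | g x ≤ 0}) : IsPreconnected {x ∈ U | g x < 0} := by
  have hclosure := closure_setOf_lt_zero hgs hcl
  refine isPreconnected_of_closure_of_locally_joinedIn (hclosure.symm ▸ hconn) fun p hp => ?_
  obtain ⟨hpU, hgp⟩ := hclosure.subset hp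
  rcases hgp.lt_or_eq with hneg | hzero
  · obtain ⟨ρ, hρ, hball⟩ := isOpen_iff.1 (isOpen_setOf_lt_zero hU hg) p ⟨hpU, hneg⟩
    exact ⟨ball p ρ, ball_mem_nhds p hρ, fun a ha b hb =>
      .of_segment_subset (((convex_ball p ρ).segment_subset ha.1 hb.1).trans hball)⟩
  · obtain ⟨L, v, B, hpB, hBU, hB⟩ := exists_isTransversalOn hgs hpU hzero
    obtain ⟨N, hN, hjoin⟩ := hB.exists_nhds_joinedIn hpB hzero
    exact ⟨N, hN, fun a ha b hb =>
      (hjoin a ha.1 b hb.1 ha.2.2 hb.2.2).mono fun y hy => ⟨hBU hy.1, hy.2⟩⟩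

theorem convex_of_isTangentiallyConvexOn (hU : IsOpen U) (hg : ContinuousOn g U)
    (hgs : IsC11SubmersionOnZeroSet g U) (hcl : IsClosed {x ∈ U | g x ≤ 0})
    (hconn : IsPreconnected {x ∈ U | g x ≤ 0}) (hconv : IsTangentiallyConvexOn g U) :
    Convex ℝ {x ∈ U | g x ≤ 0} := by
  rw [← closure_setOf_lt_zero hgs hcl]
  refine (convex_of_isOpen_of_isPreconnected (isOpen_setOf_lt_zero hU hg)
    (isPreconnected_setOf_lt_zero hU hg hgs hcl hconn) fun y hy z hz hseg => ?_).closure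
  rw [closure_setOf_lt_zero hgs hcl] at hseg
  exact segment_subset_setOf_lt_zero hg hgs hconv hy.2 hz.2 hseg

lemma frontier_setOf_le_zero (hU : IsOpen U) (hg : ContinuousOn g U)
    (hgs : IsC11SubmersionOnZeroSet g U) (hcl : IsClosed {x ∈ U | g x ≤ 0}) :
    frontier {x ∈ U | g x ≤ 0} = {x ∈ U | g x = 0} := by
  rw [hcl.frontier_eq]
  ext x
  constructor
  · rintro ⟨⟨hx, hgx⟩, hnot⟩
    refine ⟨hx, hgx.eq_of_not_lt fun hneg => hnot ?_⟩
    exact interior_maximal setOf_lt_zero_subset_setOf_le_zero (isOpen_setOf_lt_zero hU hg)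
      ⟨hx, hneg⟩
  · rintro ⟨hx, hgx⟩
    refine ⟨⟨hx, hgx.le⟩, fun hint => (hgs x hx hgx).2 ?_⟩
    have hmax : IsLocalMax g x := by
      filter_upwards [mem_interior_iff_mem_nhds.1 hint] with y hy
      exact hy.2.trans_eq hgx.symm
    exact hmax.fderiv_eq_zero

end Sublevel

theorem stmt_2_general {X : Type*} [NormedAddCommGroup X] [NormedSpace ℝ X]
    (U : Set X) (hUo : IsOpen U)
    (g : X → ℝ) (hgc : ContinuousOn g U) (hgs : IsC11SubmersionOnZeroSet g U)
    (Ω : Set X) (hΩ : Ω = {x ∈ U | g x ≤ 0})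
    (hcl : IsClosed Ω) (hconn : IsPreconnected Ω)
    (D : (X → ℝ) → X → X → X → ℝ)
    (hD : D = lowD2p ∨ D = upD2p ∨ D = lowD2m ∨ D = upD2m) :
    Convex ℝ Ω ↔ ∀ x ∈ frontier Ω, ∀ h : X, fderiv ℝ g x h = 0 → 0 ≤ D g x h h := by
  subst hΩ
  rw [frontier_setOf_le_zero hUo hgc hgs hcl]
  constructor
  · rintro hconv x ⟨hx, hgx⟩ h hh
    obtain ⟨L, v, B, hxB, -, hB⟩ := exists_isTransversalOn hgs hx hgx
    have hneg : fderiv ℝ g x (-h) = 0 := by rw [map_neg, hh, neg_zero]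
    exact (le_min (lowD2p_nonneg_of_convex hUo hgc hgs hconv hx hgx hh)
      (lowD2p_nonneg_of_convex hUo hgc hgs hconv hx hgx hneg)).trans
      (min_lowD2p_neg_le hB.lipschitzOnWith (hB.mem_nhds hxB) hD h)
  · intro hnonneg
    refine convex_of_isTangentiallyConvexOn hUo hgc hgs hcl hconn fun x hx hgx h hh => ?_
    obtain ⟨L, v, B, hxB, -, hB⟩ := exists_isTransversalOn hgs hx hgx
    have hneg : fderiv ℝ g x (-h) = 0 := by rw [map_neg, hh, neg_zero]
    exact (le_min (hnonneg x ⟨hx, hgx⟩ h hh) (hnonneg x ⟨hx, hgx⟩ (-h) hneg)).trans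
      (min_neg_le_upD2p hB.lipschitzOnWith (hB.mem_nhds hxB) hD h)

/-- Let `X` be a real Banach space, `U ⊆ X` open, `g : U → ℝ` continuous and a
`C^{1,1}`-submersion on its zero set, and suppose `Ω = {x ∈ U : g(x) ≤ 0}` is closed and
connected.  Let `𝒟²` be any of the four generalized second-order directional derivative
operators.  Then `Ω` is convex iff `𝒟²g(x,h²) ≥ 0` for all `x ∈ ∂Ω` and all `h ∈ ker g'(x)`. -/
theorem stmt_2 {X : Type*} [NormedAddCommGroup X] [NormedSpace ℝ X] [CompleteSpace X]
    (U : Set X) (hUo : IsOpen U)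
    (g : X → ℝ) (hgc : ContinuousOn g U) (hgs : IsC11SubmersionOnZeroSet g U)
    (Ω : Set X) (hΩ : Ω = {x ∈ U | g x ≤ 0})
    (hcl : IsClosed Ω) (hconn : IsConnected Ω)
    (D : (X → ℝ) → X → X → X → ℝ)
    (hD : D = lowD2p ∨ D = upD2p ∨ D = lowD2m ∨ D = upD2m) :
    Convex ℝ Ω ↔ ∀ x ∈ frontier Ω, ∀ h : X, fderiv ℝ g x h = 0 → 0 ≤ D g x h h :=
  stmt_2_general U hUo g hgc hgs Ω hΩ hcl hconn.isPreconnected D hD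
end

section
/- Let X, Y be real Banach spaces, U ⊆ X and V ⊆ Y open, g : U → ℝ continuous and a C^{1,1}-submersion on its zero set, Ω = {x ∈ U : g(x) ≤ 0} closed and connected, F : U → V a C^{1,1}-diffeomorphism, and F(Ω) closed. Let 𝒟² be any one of the four generalized second-order directional derivative operators. Then F(Ω) is convex if and only if 𝒟²(y ↦ g'(x)(F'(x)⁻¹ F(y)))(x,h²) ≤ 𝒟²g(x,h²) for all x ∈ ∂Ω and all h ∈ ker g'(x). -/
open Filter Topology Metric

/-- `F : U → V` is a `C^{1,1}`-diffeomorphism with inverse `G`: a bijection from `U` onto `V`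
which is `C¹` with locally Lipschitz derivative, with inverse of the same class. -/
def IsC11DiffeoOn {X Y : Type*} [NormedAddCommGroup X] [NormedSpace ℝ X]
    [NormedAddCommGroup Y] [NormedSpace ℝ Y]
    (F : X → Y) (G : Y → X) (U : Set X) (V : Set Y) : Prop :=
  Set.MapsTo F U V ∧ Set.MapsTo G V U ∧
    (∀ x ∈ U, G (F x) = x) ∧ (∀ y ∈ V, F (G y) = y) ∧
    ContDiffOn ℝ 1 F U ∧
    (∀ x ∈ U, ∃ ε > 0, ∃ L : NNReal,
      LipschitzOnWith L (fun y => fderiv ℝ F y) (ball x ε ∩ U)) ∧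
    ContDiffOn ℝ 1 G V ∧
    (∀ y ∈ V, ∃ ε > 0, ∃ L : NNReal,
      LipschitzOnWith L (fun z => fderiv ℝ G z) (ball y ε ∩ V))

/-!
With `φ = g ∘ F⁻¹` the image `F(Ω)` is the sublevel set `{φ ≤ 0}`, bounded by the hypersurface
`{φ = 0}`. By the chain rule the difference quotient defining `𝒟²φ(F x, (F' x h)²)` is that of `g`
minus that of `g' x ∘ F' x⁻¹ ∘ F`, up to an error tending to `0`; so the inequality between the two
operators says that `φ'` does not decrease to first order in the directions tangent to `{φ = 0}`.

Choosing `v` transversal to `{φ = 0}`, write this hypersurface as a graph `q ↦ q + S q • v`, so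
that `F(Ω)` is locally `{S ≥ 0}`. Differentiating `φ (q + S q • v) = 0` turns the tangential bound
on `φ'` into an upper bound on the growth of `S'` along lines, which makes `S` concave and `F(Ω)`
locally convex; a closed connected locally convex set is convex (Tietze–Nakajima). Conversely, if
`F(Ω)` is convex, its supporting hyperplanes at two points `y` and `z` of the graph yield the
tangential bound on `φ' z - φ' y`.
-/

section LocalConvexity

open Set

lemma min_le_of_discrete_concave {n : ℕ} {f : ℕ → ℝ}
    (hf : ∀ i, i + 2 ≤ n → f i + f (i + 2) ≤ 2 * f (i + 1)) {i : ℕ} (hi : i ≤ n) :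
    min (f 0) (f n) ≤ f i := by
  have descend : ∀ i, i ≤ n → f 0 ≤ f i ∨ ∀ k, i ≤ k → k + 1 ≤ n → f (k + 1) ≤ f k := by
    intro i
    induction i with
    | zero => exact fun _ => Or.inl le_rfl
    | succ i ih =>
      intro hi
      rcases ih (by omega) with hup | hdown
      · rcases le_total (f i) (f (i + 1)) with hle | hle
        · exact Or.inl (hup.trans hle)
        · refine Or.inr fun k hk => Nat.le_induction (fun hn => ?_) (fun k _ ihk hn => ?_) k hk
          · linarith [hf i hn]
          · linarith [hf k hn, ihk (by omega)]
      · exact Or.inr fun k hk => hdown k (by omega)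
  rcases descend i hi with hup | hdown
  · exact min_le_of_left_le hup
  · refine min_le_of_right_le ?_
    have key : ∀ m, i ≤ m → m ≤ n → f m ≤ f i := fun m him =>
      Nat.le_induction (fun _ => le_rfl)
        (fun k hik ih hk => (hdown k hik hk).trans (ih (by omega))) m him
    exact key n hi le_rfl

lemma lineMap_le_of_discrete_concave {n : ℕ} {f : ℕ → ℝ}
    (hf : ∀ i, i + 2 ≤ n → f i + f (i + 2) ≤ 2 * f (i + 1)) {i : ℕ} (hi : i ≤ n) :
    AffineMap.lineMap (f 0) (f n) ((i : ℝ) / n) ≤ f i := by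
  rcases n.eq_zero_or_pos with rfl | hn
  · obtain rfl : i = 0 := by omega
    simp
  set chord : ℕ → ℝ := fun i => AffineMap.lineMap (f 0) (f n) ((i : ℝ) / n) with hchord
  have hmin := min_le_of_discrete_concave (f := fun i => f i - chord i) (n := n) (fun i hi => by
    have haffine : chord i + chord (i + 2) = 2 * chord (i + 1) := by
      simp only [hchord, AffineMap.lineMap_apply_ring']
      push_cast
      ring
    linarith [hf i hi]) hi
  have h₀ : chord 0 = f 0 := by simp [hchord]
  have hₙ : chord n = f n := by simp [hchord, hn.ne']
  rwa [h₀, hₙ, sub_self, sub_self, min_self, sub_nonneg] at hmin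

-- The greatest heights of `P` over the integers form a discretely concave sequence.
lemma mem_of_convex_strips {P : Set (ℝ × ℝ)} (hP : IsClosed P) {n : ℕ}
    (hconv : ∀ i : ℕ, i ≤ n → Convex ℝ (P ∩ Icc ((i : ℝ) - 1) (i + 1) ×ˢ Icc 0 1))
    (hbase : ∀ i : ℕ, i ≤ n → ((i : ℝ), (0 : ℝ)) ∈ P) (hleft : ((0 : ℝ), (1 : ℝ)) ∈ P)
    {i : ℕ} (hi : i ≤ n) : ((i : ℝ), 1 - (i : ℝ) / n) ∈ P := by
  have exists_top : ∀ i : ℕ, i ≤ n →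
      ∃ s, IsGreatest (Icc 0 1 ∩ {s : ℝ | ((i : ℝ), s) ∈ P}) s := fun i hi =>
    (isCompact_Icc.inter_right (hP.preimage (by fun_prop))).exists_isGreatest
      ⟨0, by simp, hbase i hi⟩
  choose! top htop using exists_top
  have top_concave : ∀ i, i + 2 ≤ n → top i + top (i + 2) ≤ 2 * top (i + 1) := by
    intro i hi
    obtain ⟨⟨hmem, hP₁⟩, -⟩ := htop i (by omega)
    obtain ⟨⟨hmem', hP₂⟩, -⟩ := htop (i + 2) hi
    have hmid := (hconv (i + 1) (by omega)).midpoint_mem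
      ⟨hP₁, by constructor <;> push_cast <;> linarith, hmem⟩
      ⟨hP₂, by constructor <;> push_cast <;> linarith, hmem'⟩
    have hmid_eq : midpoint ℝ ((i : ℝ), top i) (((i + 2 : ℕ) : ℝ), top (i + 2)) =
        (((i + 1 : ℕ) : ℝ), (top i + top (i + 2)) / 2) := by
      ext <;> simp [midpoint_eq_smul_add] <;> ring
    rw [hmid_eq] at hmid
    linarith [(htop (i + 1) (by omega)).2 ⟨hmid.2.2, hmid.1⟩]
  have hdiv : (i : ℝ) / n ∈ Icc (0 : ℝ) 1 :=
    ⟨by positivity, div_le_one_of_le₀ (by exact_mod_cast hi) n.cast_nonneg⟩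
  have hbelow : 1 - (i : ℝ) / n ≤ top i := by
    have h₀ : 1 ≤ top 0 := (htop 0 n.zero_le).2 ⟨by simp, by simpa using hleft⟩
    have hₙ : 0 ≤ top n := (htop n le_rfl).1.1.1
    calc 1 - (i : ℝ) / n = AffineMap.lineMap 1 0 ((i : ℝ) / n) := by
          rw [AffineMap.lineMap_apply_ring]; ring
      _ ≤ AffineMap.lineMap (top 0) (top n) ((i : ℝ) / n) :=
          lineMap_mono_endpoints h₀ hₙ hdiv.1 hdiv.2
      _ ≤ top i := lineMap_le_of_discrete_concave top_concave hi
  have hseg := (hconv i hi).segment_subset (x := ((i : ℝ), (0 : ℝ))) (y := ((i : ℝ), top i))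
    ⟨hbase i hi, by simp⟩ ⟨(htop i hi).1.2, by simp, (htop i hi).1.1⟩
  rw [← Prod.image_mk_segment_right, segment_eq_Icc (htop i hi).1.1.1] at hseg
  exact (hseg ⟨_, ⟨sub_nonneg.2 hdiv.2, hbelow⟩, rfl⟩).1

variable {E : Type*} [NormedAddCommGroup E] [NormedSpace ℝ E] {K : Set E}

lemma exists_forall_convex_inter_ball_of_isCompact {C : Set E} (hC : IsCompact C)
    (hK : ∀ p ∈ C, ∃ u ∈ 𝓝 p, Convex ℝ (K ∩ u)) :
    ∃ δ > 0, ∀ p ∈ C, Convex ℝ (K ∩ ball p δ) := by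
  choose! u hu hconv using hK
  obtain ⟨δ, hδ, hball⟩ := lebesgue_number_lemma_of_metric (c := fun p : C => interior (u p)) hC
    (fun _ => isOpen_interior) fun p hp =>
      mem_iUnion.2 ⟨⟨p, hp⟩, mem_interior_iff_mem_nhds.2 (hu p hp)⟩
  refine ⟨δ, hδ, fun p hp => ?_⟩
  obtain ⟨q, hq⟩ := hball p hp
  rw [← inter_eq_right.2 (hq.trans interior_subset), ← inter_assoc]
  exact (hconv q q.2).inter (convex_ball p δ)

lemma norm_smul_add_smul_le {x y : E} {α β : ℝ} (hα : |α| ≤ 1) (hβ : |β| ≤ 1) :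
    ‖α • x + β • y‖ ≤ ‖x‖ + ‖y‖ :=
  (norm_add_le _ _).trans <| add_le_add
    ((norm_smul_le _ _).trans (mul_le_of_le_one_left (norm_nonneg x) hα))
    ((norm_smul_le _ _).trans (mul_le_of_le_one_left (norm_nonneg y) hβ))

-- In the coordinates of `L`, `K` is convex in overlapping strips along `segment ℝ z a`, and
-- `segment ℝ z' a` is the diagonal joining the top of the first strip to the base of the last.
lemma lineMap_mem_of_convex_inter_ball {a z z' : E} (hK : IsClosed K) {δ : ℝ}
    (hconv : ∀ p ∈ segment ℝ z a, Convex ℝ (K ∩ ball p δ)) (hseg : segment ℝ z a ⊆ K)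
    (hz' : z' ∈ K) {n : ℕ} (hn : dist a z / n + dist z' z < δ) {i : ℕ} (hi : i ≤ n) :
    AffineMap.lineMap z' a ((i : ℝ) / n) ∈ K := by
  rcases n.eq_zero_or_pos with rfl | hn₀
  · simpa using hz'
  have hn' : (0 : ℝ) < n := by exact_mod_cast hn₀
  set w : E := (n : ℝ)⁻¹ • (a - z) with hw
  set L : ℝ × ℝ →ᵃ[ℝ] E := ((LinearMap.toSpanSingleton ℝ E w).coprod
    (LinearMap.toSpanSingleton ℝ E (z' - z))).toAffineMap + AffineMap.const ℝ (ℝ × ℝ) z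
  have hL : ∀ p, L p = p.1 • w + p.2 • (z' - z) + z := fun p => by simp [L]
  have node_mem : ∀ j : ℕ, j ≤ n → (j : ℝ) • w + z ∈ segment ℝ z a := by
    intro j hj
    rw [segment_eq_image_lineMap]
    refine ⟨(j : ℝ) / n, ⟨by positivity, (div_le_one hn').2 (by exact_mod_cast hj)⟩, ?_⟩
    rw [AffineMap.lineMap_apply_module', hw, smul_smul, div_eq_mul_inv]
  have strip_convex : ∀ j : ℕ, j ≤ n →
      Convex ℝ (L ⁻¹' K ∩ Icc ((j : ℝ) - 1) (j + 1) ×ˢ Icc 0 1) := by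
    intro j hj
    have hball : Icc ((j : ℝ) - 1) (j + 1) ×ˢ Icc 0 1 ⊆ L ⁻¹' ball ((j : ℝ) • w + z) δ := by
      rintro ⟨θ, s⟩ ⟨hθ, hs⟩
      have hdiff : L (θ, s) - ((j : ℝ) • w + z) = (θ - j) • w + s • (z' - z) := by
        rw [hL]; module
      rw [mem_preimage, mem_ball_iff_norm, hdiff]
      refine (norm_smul_add_smul_le (abs_le.2 ⟨by linarith [hθ.1], by linarith [hθ.2]⟩)
        (abs_le.2 ⟨by linarith [hs.1], hs.2⟩)).trans_lt ?_
      rwa [hw, norm_smul, norm_inv, Real.norm_natCast, ← dist_eq_norm, ← dist_eq_norm,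
        inv_mul_eq_div]
    rw [← inter_eq_right.2 hball, ← inter_assoc, ← preimage_inter]
    exact ((hconv _ (node_mem j hj)).affine_preimage L).inter
      ((convex_Icc _ _).prod (convex_Icc _ _))
  have hmem := mem_of_convex_strips (P := L ⁻¹' K)
    (hK.preimage (by simp only [funext hL]; fun_prop)) strip_convex
    (fun j hj => hseg (by simpa [hL] using node_mem j hj)) (by simpa [hL] using hz') hi
  rw [mem_preimage, hL] at hmem
  convert hmem using 1
  simp only [hw, AffineMap.lineMap_apply_module']
  module

lemma segment_subset_of_dist_lt {a z z' : E} (hK : IsClosed K) {δ : ℝ}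
    (hconv : ∀ p ∈ segment ℝ z a, Convex ℝ (K ∩ ball p δ)) (hseg : segment ℝ z a ⊆ K)
    (hz' : z' ∈ K) (hdist : dist z' z < δ) : segment ℝ z' a ⊆ K := by
  have hlarge : ∀ᶠ n : ℕ in atTop, dist a z / n + dist z' z < δ := by
    have hlim := (tendsto_const_div_atTop_nhds_zero_nat (dist a z)).add_const (dist z' z)
    exact hlim.eventually_lt_const (by simpa using hdist)
  rw [segment_eq_image_lineMap]
  rintro _ ⟨t, ht, rfl⟩
  have hlim : Tendsto (fun n : ℕ => AffineMap.lineMap z' a ((⌊t * n⌋₊ : ℝ) / n) : ℕ → E) atTop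
      (𝓝 (AffineMap.lineMap z' a t)) :=
    (AffineMap.lineMap_continuous.tendsto t).comp
      ((tendsto_nat_floor_mul_div_atTop ht.1).comp tendsto_natCast_atTop_atTop)
  refine hK.mem_of_tendsto hlim (hlarge.mono fun n hn => ?_)
  refine lineMap_mem_of_convex_inter_ball hK hconv hseg hz' hn (Nat.floor_le_of_le ?_)
  exact mul_le_of_le_one_left n.cast_nonneg ht.2

lemma isClosed_setOf_segment_subset_s3 (hK : IsClosed K) (a : E) :
    IsClosed {z | segment ℝ z a ⊆ K} := by
  have hinter : {z | segment ℝ z a ⊆ K} =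
      ⋂ t ∈ Icc (0 : ℝ) 1, {z | AffineMap.lineMap z a t ∈ K} := by
    ext z
    simp only [segment_eq_image_lineMap, image_subset_iff, mem_iInter]
    rfl
  rw [hinter]
  exact isClosed_biInter fun t _ => hK.preimage (f := fun z => AffineMap.lineMap z a t)
    (by simp only [AffineMap.lineMap_apply_module']; fun_prop)

theorem convex_of_isPreconnected_of_locally_convex (hK : IsClosed K) (hconn : IsPreconnected K)
    (hloc : ∀ p ∈ K, ∃ u ∈ 𝓝 p, Convex ℝ (K ∩ u)) : Convex ℝ K := by
  rw [convex_iff_segment_subset]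
  intro z hz a ha
  have hzero : segment ℝ a a ⊆ K := by simpa using ha
  refine hconn.induction₂' (fun x y => segment ℝ x a ⊆ K → segment ℝ y a ⊆ K) ?_
    (fun _ _ _ _ _ _ hxy hyz => hyz ∘ hxy) ha hz hzero
  intro x _
  by_cases hvis : segment ℝ x a ⊆ K
  · have hcompact : IsCompact (segment ℝ x a) := by
      rw [segment_eq_image_lineMap]
      exact isCompact_Icc.image AffineMap.lineMap_continuous
    obtain ⟨δ, hδ, hconv⟩ := exists_forall_convex_inter_ball_of_isCompact hcompact
      fun p hp => hloc p (hvis hp)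
    filter_upwards [self_mem_nhdsWithin, mem_nhdsWithin_of_mem_nhds (ball_mem_nhds x hδ)]
      with y hyK hyx
    exact ⟨fun _ => segment_subset_of_dist_lt hK hconv hvis hyK hyx, fun _ => hvis⟩
  · have hopen := (isClosed_setOf_segment_subset_s3 hK a).isOpen_compl.mem_nhds hvis
    filter_upwards [mem_nhdsWithin_of_mem_nhds hopen] with y hy
    exact ⟨fun h => absurd h hvis, fun h => absurd h hy⟩

end LocalConvexity

section C11

open Set Asymptotics
open scoped NNReal

variable {E F W : Type*} [NormedAddCommGroup E] [NormedSpace ℝ E] [NormedAddCommGroup F]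
  [NormedSpace ℝ F] [NormedAddCommGroup W] [NormedSpace ℝ W]

/-- `f` is of class `C^{1,1}` at `x`: it is differentiable near `x` and its derivative is Lipschitz
near `x`. -/
def C11At (f : E → F) (x : E) : Prop :=
  (∀ᶠ z in 𝓝 x, DifferentiableAt ℝ f z) ∧
    ∃ L : ℝ≥0, ∃ u ∈ 𝓝 x, LipschitzOnWith L (fderiv ℝ f) u

namespace C11At

variable {f : E → F} {x : E}

lemma differentiableAt (hf : C11At f x) : DifferentiableAt ℝ f x := hf.1.self_of_nhds

lemma continuousAt_fderiv (hf : C11At f x) : ContinuousAt (fderiv ℝ f) x := by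
  obtain ⟨-, L, u, hu, hL⟩ := hf
  exact hL.continuousOn.continuousAt hu

lemma hasStrictFDerivAt (hf : C11At f x) : HasStrictFDerivAt f (fderiv ℝ f x) x :=
  hasStrictFDerivAt_of_hasFDerivAt_of_continuousAt
    (hf.1.mono fun _ hz => hz.hasFDerivAt) hf.continuousAt_fderiv

lemma eventually (hf : C11At f x) : ∀ᶠ z in 𝓝 x, C11At f z := by
  obtain ⟨hd, L, u, hu, hL⟩ := hf
  filter_upwards [hd.eventually_nhds, eventually_mem_nhds_iff.2 hu] with z hz hzu
  exact ⟨hz, L, u, hzu, hL⟩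

lemma of_contDiffOn {s : Set E} (hs : IsOpen s) (hx : x ∈ s) (hf : ContDiffOn ℝ 1 f s)
    {L : ℝ≥0} {u : Set E} (hu : u ∈ 𝓝 x) (hL : LipschitzOnWith L (fderiv ℝ f) u) :
    C11At f x := by
  refine ⟨?_, L, u, hu, hL⟩
  filter_upwards [hs.mem_nhds hx] with z hz
  exact (hf.differentiableOn one_ne_zero).differentiableAt (hs.mem_nhds hz)

lemma comp {g : F → W} (hg : C11At g (f x)) (hf : C11At f x) : C11At (g ∘ f) x := by
  have hcont := hf.differentiableAt.continuousAt
  obtain ⟨M, s, hs, hM⟩ := hf.hasStrictFDerivAt.exists_lipschitzOnWith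
  obtain ⟨hgd, Lg, v, hv, hLg⟩ := hg
  obtain ⟨hfd, Lf, u, hu, hLf⟩ := hf
  set derivs : E → (F →L[ℝ] W) × (E →L[ℝ] F) := fun z => (fderiv ℝ g (f z), fderiv ℝ f z)
  have hderivs : LipschitzOnWith (max (Lg * M) Lf) derivs (s ∩ f ⁻¹' v ∩ u) :=
    ((hLg.comp (hM.mono inter_subset_left) inter_subset_right).mono inter_subset_left).prodMk
      (hLf.mono inter_subset_right)
  have hcomp : ContDiff ℝ 1 fun p : (F →L[ℝ] W) × (E →L[ℝ] F) => p.1.comp p.2 := by fun_prop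
  obtain ⟨N, t, ht, hN⟩ := (hcomp.contDiffAt (x := derivs x)).exists_lipschitzOnWith
  have hr : s ∩ f ⁻¹' v ∩ u ∈ 𝓝 x := inter_mem (inter_mem hs (hcont hv)) hu
  have hchain : ∀ᶠ z in 𝓝 x, DifferentiableAt ℝ g (f z) ∧ DifferentiableAt ℝ f z :=
    (hcont.eventually hgd).and hfd
  have hmaps : derivs ⁻¹' t ∈ 𝓝 x := hderivs.continuousOn.continuousAt hr ht
  refine ⟨hchain.mono fun z hz => hz.1.comp z hz.2, N * max (Lg * M) Lf, _,
    inter_mem (inter_mem hr hmaps) hchain, fun z hz w hw => ?_⟩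
  rw [fderiv_comp z hz.2.1 hz.2.2, fderiv_comp w hw.2.1 hw.2.2]
  exact (hN.comp (hderivs.mono inter_subset_left) inter_subset_right) hz.1 hw.1

lemma clm_comp (ℓ : F →L[ℝ] W) (hf : C11At f x) : C11At (ℓ ∘ f) x := by
  refine comp ⟨.of_forall fun _ => ℓ.differentiableAt, 0, univ, univ_mem, ?_⟩ hf
  rw [funext fun z => ℓ.fderiv (x := z)]
  exact (LipschitzWith.const ℓ).lipschitzOnWith

lemma isLittleO_fderiv_curve {c : ℝ → E} {τ : E} (hf : C11At f x) (hc : HasDerivAt c τ 0)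
    (hc₀ : c 0 = x) :
    (fun t => fderiv ℝ f (c t) - fderiv ℝ f (x + t • τ)) =o[𝓝 0] (fun t : ℝ => t) := by
  obtain ⟨-, L, u, hu, hL⟩ := hf
  have hline : ContinuousAt (fun t : ℝ => x + t • τ) 0 := by fun_prop
  have hcu : ∀ᶠ t in 𝓝 (0 : ℝ), c t ∈ u ∧ x + t • τ ∈ u :=
    (hc.continuousAt.eventually_mem (by rwa [hc₀])).and
      (hline.eventually_mem (by simpa using hu))
  have hLip : (fun t => fderiv ℝ f (c t) - fderiv ℝ f (x + t • τ)) =O[𝓝 0]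
      fun t => c t - (x + t • τ) :=
    .of_bound L (hcu.mono fun t ht => by
      simpa only [dist_eq_norm] using hL.dist_le_mul _ ht.1 _ ht.2)
  refine hLip.trans_isLittleO ?_
  simpa [hc₀, sub_sub] using hc.isLittleO

lemma isBigO_fderiv_line_sub (hf : C11At f x) (h : E) :
    (fun t : ℝ => fderiv ℝ f (x + t • h) - fderiv ℝ f x) =O[𝓝 0] fun t => t := by
  obtain ⟨-, L, u, hu, hL⟩ := hf
  have hline : ContinuousAt (fun t : ℝ => x + t • h) 0 := by fun_prop
  refine .of_bound (L * ‖h‖) ((hline.eventually_mem (by simpa using hu)).mono fun t ht => ?_)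
  calc ‖fderiv ℝ f (x + t • h) - fderiv ℝ f x‖
      ≤ L * ‖x + t • h - x‖ := hL.norm_sub_le ht (mem_of_mem_nhds hu)
    _ = L * ‖h‖ * ‖t‖ := by rw [add_sub_cancel_left, norm_smul]; ring

end C11At

/-- The difference quotient whose lower and upper limits are the generalized second-order
directional derivatives `𝒟²f(x,h²)`. -/
noncomputable def secondQuotient (f : E → ℝ) (x h : E) (t : ℝ) : ℝ :=
  (fderiv ℝ f (x + t • h) h - fderiv ℝ f x h) / t

lemma secondQuotient_neg_neg (f : E → ℝ) (x h : E) (t : ℝ) :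
    secondQuotient f x (-h) (-t) = secondQuotient f x h t := by
  simp only [secondQuotient, neg_smul_neg, map_neg, div_neg]
  ring

lemma secondQuotient_congr {f g : E → ℝ} {x : E} (hfg : f =ᶠ[𝓝 x] g) (h : E) :
    ∀ᶠ t in 𝓝 0, secondQuotient f x h t = secondQuotient g x h t := by
  have hline : Tendsto (fun t : ℝ => x + t • h) (𝓝 0) (𝓝 x) :=
    Continuous.tendsto' (by fun_prop) _ _ (by simp)
  filter_upwards [hline.eventually (hfg.fderiv (𝕜 := ℝ))] with t ht
  rw [secondQuotient, secondQuotient, ht, hfg.fderiv_eq]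

lemma C11At.isBoundedUnder_secondQuotient {f : E → ℝ} {x : E} (hf : C11At f x) (h : E) :
    IsBoundedUnder (· ≤ ·) (𝓝 0) fun t => |secondQuotient f x h t| :=
  div_isBoundedUnder_of_isBigO <|
    ((ContinuousLinearMap.apply ℝ ℝ h).isBigO_comp _ _).trans (hf.isBigO_fderiv_line_sub h)

namespace C11At

lemma tendsto_fderiv_curve_sub_div {f : E → ℝ} {x : E} {c : ℝ → E} {τ : E} (hf : C11At f x)
    (hc : HasDerivAt c τ 0) (hc₀ : c 0 = x) (k : E) :
    Tendsto (fun t => (fderiv ℝ f (c t) k - fderiv ℝ f (x + t • τ) k) / t) (𝓝 0) (𝓝 0) := by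
  have happly : (fun t => fderiv ℝ f (c t) k - fderiv ℝ f (x + t • τ) k) =O[𝓝 0]
      fun t => fderiv ℝ f (c t) - fderiv ℝ f (x + t • τ) := by
    simpa using (ContinuousLinearMap.apply ℝ ℝ k).isBigO_comp
      (fun t => fderiv ℝ f (c t) - fderiv ℝ f (x + t • τ)) (𝓝 0)
  exact (happly.trans_isLittleO (hf.isLittleO_fderiv_curve hc hc₀)).tendsto_div_nhds_zero

end C11At

/-- `S` is a height function over `u` of the sublevel set `{φ ≤ 0}` in the upward direction `v`:
it is Lipschitz, the hypersurface `{φ = 0}` is the graph `q ↦ q + S q • v`, and the points of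
`{φ ≤ 0}` are those of nonnegative height. -/
structure IsGraphHeight (φ : E → ℝ) (v : E) (S : E → ℝ) (u : Set E) : Prop where
  exists_lipschitzOnWith : ∃ L, LipschitzOnWith L S u
  apply_add_smul_eq_zero : ∀ q ∈ u, φ (q + S q • v) = 0
  nonneg_iff : ∀ q ∈ u, 0 ≤ S q ↔ φ q ≤ 0

section Height

variable {φ S : E → ℝ} {v q : E} {ℓ : E →L[ℝ] ℝ} {s u : Set E} {c : ℝ≥0}

lemma half_sub_le_sub_of_approximatesLinearOn (hφ : ApproximatesLinearOn φ ℓ s c) (hv : ℓ v = 1)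
    (hc : c * ‖v‖ ≤ 1 / 2) {a b : ℝ} (ha : q + a • v ∈ s) (hb : q + b • v ∈ s) (hab : a ≤ b) :
    (b - a) / 2 ≤ φ (q + b • v) - φ (q + a • v) := by
  have happrox := neg_le_of_abs_le (hφ _ hb _ ha)
  rw [add_sub_add_left_eq_sub, ← sub_smul, map_smul, hv, smul_eq_mul, mul_one, norm_smul,
    Real.norm_of_nonneg (sub_nonneg.2 hab)] at happrox
  nlinarith

lemma exists_apply_add_smul_eq_zero (hφ : ApproximatesLinearOn φ ℓ s c) (hv : ℓ v = 1)
    (hc : c * ‖v‖ ≤ 1 / 2) {ρ : ℝ} (hs : ∀ a ∈ Icc (-ρ) ρ, q + a • v ∈ s) (hq : |φ q| ≤ ρ / 2) :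
    ∃ a ∈ Icc (-ρ) ρ, φ (q + a • v) = 0 := by
  have hρ : 0 ≤ ρ := by linarith [abs_nonneg (φ q)]
  have hq₀ : q + (0 : ℝ) • v ∈ s := hs 0 ⟨by linarith, hρ⟩
  have hup := half_sub_le_sub_of_approximatesLinearOn hφ hv hc hq₀ (hs ρ ⟨by linarith, le_rfl⟩) hρ
  have hdown := half_sub_le_sub_of_approximatesLinearOn hφ hv hc (hs (-ρ) ⟨le_rfl, by linarith⟩)
    hq₀ (by linarith)
  rw [zero_smul, add_zero] at hup hdown
  have hcont : ContinuousOn (fun a : ℝ => φ (q + a • v)) (Icc (-ρ) ρ) :=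
    hφ.continuousOn.comp (by fun_prop) hs
  exact intermediate_value_Icc (by linarith) hcont
    ⟨by linarith [le_of_abs_le hq], by linarith [neg_le_of_abs_le hq]⟩

lemma isGraphHeight_of_approximatesLinearOn (hφ : ApproximatesLinearOn φ ℓ s c) (hv : ℓ v = 1)
    (hc : c * ‖v‖ ≤ 1 / 2) {ρ : ℝ} (hs : ∀ q ∈ u, ∀ a ∈ Icc (-ρ) ρ, q + a • v ∈ s)
    (hS : ∀ q ∈ u, S q ∈ Icc (-ρ) ρ ∧ φ (q + S q • v) = 0) : IsGraphHeight φ v S u := by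
  have mono {q : E} (hq : q ∈ u) {a b : ℝ} (ha : a ∈ Icc (-ρ) ρ) (hb : b ∈ Icc (-ρ) ρ) :
      a ≤ b → (b - a) / 2 ≤ φ (q + b • v) - φ (q + a • v) :=
    half_sub_le_sub_of_approximatesLinearOn hφ hv hc (hs q hq a ha) (hs q hq b hb)
  refine ⟨⟨Real.toNNReal (2 * (‖ℓ‖ + c)), LipschitzOnWith.of_le_add_mul' _ fun q hq q' hq' => ?_⟩,
    fun q hq => (hS q hq).2, fun q hq => ?_⟩
  · obtain ⟨⟨hSq, hq₀⟩, hSq', hq₀'⟩ := And.intro (hS q hq) (hS q' hq')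
    rcases le_total (S q) (S q') with hle | hle
    · exact le_add_of_le_of_nonneg hle (by positivity)
    have hrise := mono hq hSq' hSq hle
    have happrox := neg_le_of_abs_le (hφ _ (hs q hq _ hSq') _ (hs q' hq' _ hSq'))
    have hbound := neg_le_of_abs_le (ℓ.le_opNorm (q - q'))
    rw [add_sub_add_right_eq_sub] at happrox
    rw [dist_eq_norm]
    linarith
  · obtain ⟨hSq, hq₀⟩ := hS q hq
    have hρ : (0 : ℝ) ∈ Icc (-ρ) ρ := ⟨by linarith [hSq.1, hSq.2], by linarith [hSq.1, hSq.2]⟩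
    have hrise := mono hq hρ hSq
    have hfall := mono hq hSq hρ
    rw [zero_smul, add_zero] at hrise hfall
    constructor
    · intro hle
      linarith [hrise hle]
    · intro hle
      by_contra! hneg
      linarith [hfall hneg.le]

lemma exists_isGraphHeight {y : E} (hφ : HasStrictFDerivAt φ ℓ y) (hy : φ y = 0) (hv : ℓ v = 1) :
    ∃ S, ∃ u ∈ 𝓝 y, IsGraphHeight φ v S u ∧ S y = 0 := by
  obtain ⟨c, hc₀, hcv⟩ := exists_pos_mul_lt (one_half_pos (α := ℝ)) ‖v‖
  lift c to ℝ≥0 using hc₀.le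
  rw [mul_comm] at hcv
  obtain ⟨s, hs, happrox⟩ := hφ.approximates_deriv_on_nhds (Or.inr hc₀)
  have hline : ∀ᶠ p : E × ℝ in 𝓝 (y, 0), p.1 + p.2 • v ∈ s :=
    ContinuousAt.eventually_mem (by fun_prop) (by simpa using hs)
  obtain ⟨w, hw, I, hI, hwI⟩ := mem_nhds_prod_iff.1 hline
  obtain ⟨ρ, hρ, hρI⟩ := nhds_basis_closedBall.mem_iff.1 hI
  rw [Real.closedBall_eq_Icc, zero_sub, zero_add] at hρI
  have hmem : ∀ q ∈ w, ∀ a ∈ Icc (-ρ) ρ, q + a • v ∈ s := fun q hq a ha =>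
    hwI (mk_mem_prod hq (hρI ha))
  have hsmall : ∀ᶠ q in 𝓝 y, |φ q| < ρ / 2 :=
    hφ.continuousAt.abs.eventually_lt_const (by simpa [hy] using hρ)
  have hroot : ∀ q ∈ w ∩ {q | |φ q| < ρ / 2}, ∃ a ∈ Icc (-ρ) ρ, φ (q + a • v) = 0 := fun q hq =>
    exists_apply_add_smul_eq_zero happrox hv hcv.le (hmem q hq.1) (le_of_lt hq.2)
  choose! S hS using hroot
  have hheight : IsGraphHeight φ v S (w ∩ {q | |φ q| < ρ / 2}) :=
    isGraphHeight_of_approximatesLinearOn happrox hv hcv.le (fun q hq => hmem q hq.1) hS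
  have hyu := inter_mem hw hsmall
  have hSy := hS y (mem_of_mem_nhds hyu)
  have hnonneg := (hheight.nonneg_iff y (mem_of_mem_nhds hyu)).2 hy.le
  have hrise := half_sub_le_sub_of_approximatesLinearOn (q := y) happrox hv hcv.le (a := 0)
    (by simpa using mem_of_mem_nhds hs) (hmem y (mem_of_mem_nhds hw) _ hSy.1) hnonneg
  rw [hSy.2, zero_smul, add_zero, hy] at hrise
  exact ⟨S, _, hyu, hheight, by linarith⟩

namespace IsGraphHeight

lemma continuousAt (hS : IsGraphHeight φ v S u) (hu : u ∈ 𝓝 q) : ContinuousAt S q := by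
  obtain ⟨L, hL⟩ := hS.exists_lipschitzOnWith
  exact hL.continuousOn.continuousAt hu

lemma hasFDerivAt (hS : IsGraphHeight φ v S u) (hu : u ∈ 𝓝 q) (hφ : HasFDerivAt φ ℓ (q + S q • v))
    (hv : ℓ v ≠ 0) : HasFDerivAt S (-(ℓ v)⁻¹ • ℓ) q := by
  obtain ⟨L, hL⟩ := hS.exists_lipschitzOnWith
  set graph : E → E := fun p => p + S p • v with hgraph
  have hgraph_cont : ContinuousAt graph q :=
    continuousAt_id.add ((hS.continuousAt hu).smul continuousAt_const)
  have hS_bigO : (fun p => S p - S q) =O[𝓝 q] fun p => p - q :=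
    .of_bound L (mem_of_superset hu fun p hp => hL.norm_sub_le hp (mem_of_mem_nhds hu))
  have hgraph_bigO : (fun p => graph p - graph q) =O[𝓝 q] fun p => p - q := by
    have hsmul : (fun p => (S p - S q) • v) =O[𝓝 q] fun p => p - q :=
      ((ContinuousLinearMap.toSpanSingleton ℝ v).isBigO_comp _ _).trans hS_bigO
    refine ((isBigO_refl _ _).add hsmul).congr_left fun p => ?_
    simp only [hgraph]
    module
  have hdiff := (hφ.isLittleO.comp_tendsto hgraph_cont).trans_isBigO hgraph_bigO
  refine .of_isLittleO ((hdiff.const_mul_left (-(ℓ v)⁻¹)).congr' ?_ .rfl)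
  filter_upwards [hu] with p hp
  have hzero := hS.apply_add_smul_eq_zero
  simp only [Function.comp_apply, hgraph, hzero p hp, hzero q (mem_of_mem_nhds hu), map_sub,
    map_add, map_smul, smul_eq_mul, smul_apply]
  field_simp
  ring

end IsGraphHeight

end Height

lemma antitoneOn_of_frequently_slope_lt {w : ℝ → ℝ} {a b : ℝ} (hw : ContinuousOn w (Icc a b))
    (hslope : ∀ x ∈ Ico a b, ∀ η > 0, ∃ᶠ z in 𝓝[>] x, slope w x z < η) :
    AntitoneOn w (Icc a b) := by
  intro x hx y hy hxy
  refine image_le_of_liminf_slope_right_le_deriv_boundary (f := w) (B := fun _ => w x)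
    (B' := fun _ => 0) (hw.mono (Icc_subset_Icc hx.1 hy.2)) le_rfl continuousOn_const
    (fun _ _ => hasDerivWithinAt_const ..) (fun z hz η hη => ?_) ⟨hxy, le_rfl⟩
  exact hslope z ⟨hx.1.trans hz.1, hz.2.trans_le hy.2⟩ η hη

lemma concaveOn_of_frequently_secondQuotient_lt {S : E → ℝ} {u : Set E} (hu : IsOpen u)
    (hconv : Convex ℝ u) (hS : ContDiffOn ℝ 1 S u)
    (hsecond : ∀ q ∈ u, ∀ k, ∀ η > 0, ∃ᶠ t in 𝓝[>] 0, secondQuotient S q k t < η) :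
    ConcaveOn ℝ u S := by
  refine ⟨hconv, fun x hx y hy a b ha hb hab => ?_⟩
  set line : ℝ →ᵃ[ℝ] E := AffineMap.lineMap x y
  have hline_mem : MapsTo line (Icc 0 1) u := fun θ hθ => hconv.lineMap_mem hx hy hθ
  have hderiv : ∀ θ ∈ Icc (0 : ℝ) 1,
      HasDerivAt (S ∘ line) (fderiv ℝ S (line θ) (y - x)) θ := fun θ hθ => by
    have hSθ := (hS.differentiableOn one_ne_zero).differentiableAt (hu.mem_nhds (hline_mem hθ))
    exact hSθ.hasFDerivAt.comp_hasDerivAt θ AffineMap.hasDerivAt_lineMap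
  have hanti : AntitoneOn (fun θ => fderiv ℝ S (line θ) (y - x)) (Icc 0 1) := by
    refine antitoneOn_of_frequently_slope_lt ?_ fun θ hθ η hη => ?_
    · exact ((hS.continuousOn_fderiv_of_isOpen hu le_rfl).comp
        AffineMap.lineMap_continuous.continuousOn hline_mem).clm_apply continuousOn_const
    · rw [← add_zero θ, ← map_add_left_nhdsGT, frequently_map]
      refine (hsecond _ (hline_mem (Ico_subset_Icc_self hθ)) (y - x) η hη).mono fun t ht => ?_
      have hline_add : line (θ + t) = line θ + t • (y - x) := by
        simp only [line, AffineMap.lineMap_apply_module']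
        module
      rwa [slope_def_field, hline_add, add_zero, add_sub_cancel_left]
  have hconcave : ConcaveOn ℝ (Icc 0 1) (S ∘ line) := by
    refine AntitoneOn.concaveOn_of_deriv (convex_Icc 0 1)
      (fun θ hθ => (hderiv θ hθ).continuousAt.continuousWithinAt) ?_ ?_
    · exact fun θ hθ => (hderiv θ (interior_subset hθ)).differentiableAt.differentiableWithinAt
    · exact (hanti.mono interior_subset).congr fun θ hθ =>
        (hderiv θ (interior_subset hθ)).deriv.symm
  obtain rfl : a = 1 - b := by linarith
  have hat_b := hconcave.2 (left_mem_Icc.2 zero_le_one) (right_mem_Icc.2 zero_le_one) ha hb hab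
  simpa [line, AffineMap.lineMap_apply_module] using hat_b

namespace IsGraphHeight

variable {φ S : E → ℝ} {v q : E} {u : Set E}

lemma mono {w : Set E} (hS : IsGraphHeight φ v S u) (hw : w ⊆ u) : IsGraphHeight φ v S w :=
  ⟨hS.exists_lipschitzOnWith.imp fun _ hL => hL.mono hw,
    fun q hq => hS.apply_add_smul_eq_zero q (hw hq), fun q hq => hS.nonneg_iff q (hw hq)⟩

lemma fderiv_eq (hS : IsGraphHeight φ v S u) (hu : u ∈ 𝓝 q)
    (hφ : DifferentiableAt ℝ φ (q + S q • v)) (hv : fderiv ℝ φ (q + S q • v) v ≠ 0) :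
    fderiv ℝ S q = -(fderiv ℝ φ (q + S q • v) v)⁻¹ • fderiv ℝ φ (q + S q • v) :=
  (hS.hasFDerivAt hu hφ.hasFDerivAt hv).fderiv

lemma fderiv_apply_tangent (hS : IsGraphHeight φ v S u) (hu : u ∈ 𝓝 q)
    (hφ : DifferentiableAt ℝ φ (q + S q • v)) (hv : fderiv ℝ φ (q + S q • v) v ≠ 0) (k : E) :
    fderiv ℝ φ (q + S q • v) (k + fderiv ℝ S q k • v) = 0 := by
  rw [hS.fderiv_eq hu hφ hv, map_add, map_smul, smul_apply, smul_eq_mul, smul_eq_mul]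
  field_simp
  ring

lemma hasDerivAt_path (hS : IsGraphHeight φ v S u) (hu : u ∈ 𝓝 q)
    (hφ : DifferentiableAt ℝ φ (q + S q • v)) (hv : fderiv ℝ φ (q + S q • v) v ≠ 0) (k : E) :
    HasDerivAt (fun t : ℝ => q + t • k + S (q + t • k) • v) (k + fderiv ℝ S q k • v) 0 := by
  have hline : HasDerivAt (fun t : ℝ => q + t • k) k 0 := by
    simpa using ((hasDerivAt_id (0 : ℝ)).smul_const k).const_add q
  have hSq : HasFDerivAt S (fderiv ℝ S q) (q + (0 : ℝ) • k) := by
    simpa using (hS.hasFDerivAt hu hφ.hasFDerivAt hv).differentiableAt.hasFDerivAt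
  exact hline.add ((hSq.comp_hasDerivAt 0 hline).smul_const v)

lemma hasDerivAt_path_of_tangent (hS : IsGraphHeight φ v S u) (hu : u ∈ 𝓝 q) (hSq : S q = 0)
    (hφ : DifferentiableAt ℝ φ q) (hv : fderiv ℝ φ q v ≠ 0) {k : E} (hk : fderiv ℝ φ q k = 0) :
    HasDerivAt (fun t : ℝ => q + t • k + S (q + t • k) • v) k 0 := by
  have hgraph : q + S q • v = q := by rw [hSq, zero_smul, add_zero]
  rw [← hgraph] at hφ hv hk
  have hSk : fderiv ℝ S q k = 0 := by rw [hS.fderiv_eq hu hφ hv, smul_apply, hk, smul_zero]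
  simpa only [hSk, zero_smul, add_zero] using hS.hasDerivAt_path hu hφ hv k

lemma frequently_secondQuotient_lt (hS : IsGraphHeight φ v S u) (hu : u ∈ 𝓝 q)
    (hφ : C11At φ (q + S q • v)) (hv : 0 < fderiv ℝ φ (q + S q • v) v)
    (hsecond : ∀ k, fderiv ℝ φ (q + S q • v) k = 0 →
      ∀ η > 0, ∃ᶠ t in 𝓝[>] 0, -η < secondQuotient φ (q + S q • v) k t)
    (k : E) {η : ℝ} (hη : 0 < η) : ∃ᶠ t in 𝓝[>] 0, secondQuotient S q k t < η := by
  set p := q + S q • v with hp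
  set path : ℝ → E := fun t => q + t • k + S (q + t • k) • v with hpath
  set τ : E := k + fderiv ℝ S q k • v
  have hpath₀ : path 0 = p := by simp [hpath, hp]
  have hpath_deriv : HasDerivAt path τ 0 := hS.hasDerivAt_path hu hφ.differentiableAt hv.ne' k
  have htangent : fderiv ℝ φ p τ = 0 := hS.fderiv_apply_tangent hu hφ.differentiableAt hv.ne' k
  have hfreq := hsecond τ htangent (fderiv ℝ φ p v * η / 4) (by positivity)
  have hsmall := (hφ.tendsto_fderiv_curve_sub_div hpath_deriv hpath₀ τ).eventually_const_lt
    (show -(fderiv ℝ φ p v * η / 4) < 0 by linarith [mul_pos hv hη])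
  have hpath_tendsto : Tendsto path (𝓝 0) (𝓝 p) := hpath₀ ▸ hpath_deriv.continuousAt
  have hC11 : ∀ᶠ t in 𝓝 0, C11At φ (path t) := hpath_tendsto.eventually hφ.eventually
  have hslope : ∀ᶠ t in 𝓝 0, fderiv ℝ φ p v / 2 < fderiv ℝ φ (path t) v :=
    hpath_tendsto.eventually <|
      (hφ.continuousAt_fderiv.clm_apply continuousAt_const).eventually_const_lt (by linarith)
  have hu' : ∀ᶠ t in 𝓝 (0 : ℝ), u ∈ 𝓝 (q + t • k) :=
    (show ContinuousAt (fun t : ℝ => q + t • k) 0 by fun_prop).eventually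
      (p := fun z => u ∈ 𝓝 z) (by simpa using hu)
  refine (hfreq.and_eventually <|
    nhdsWithin_le_nhds (hsmall.and (hC11.and (hslope.and hu')))).mono ?_
  rintro t ⟨hlower, hclose, hC11t, hslope_t, hut⟩
  have hvt : 0 < fderiv ℝ φ (path t) v := by linarith
  have htangent_t := hS.fderiv_apply_tangent hut hC11t.differentiableAt hvt.ne' k
  have hdrop : secondQuotient S q k t * fderiv ℝ φ (path t) v = -(fderiv ℝ φ (path t) τ / t) := by
    rw [map_add, map_smul, smul_eq_mul] at htangent_t
    rw [secondQuotient, div_mul_eq_mul_div, ← neg_div, map_add, map_smul, smul_eq_mul]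
    congr 1
    linarith
  rw [secondQuotient, htangent, sub_zero] at hlower
  rw [sub_div] at hclose
  refine lt_of_mul_lt_mul_right ?_ hvt.le
  rw [hdrop]
  nlinarith

lemma contDiffOn (hS : IsGraphHeight φ v S u) (hu : IsOpen u)
    (hφ : ∀ q ∈ u, C11At φ (q + S q • v)) (hv : ∀ q ∈ u, fderiv ℝ φ (q + S q • v) v ≠ 0) :
    ContDiffOn ℝ 1 S u := by
  have hderiv : ∀ q ∈ u, HasFDerivAt S _ q := fun q hq =>
    hS.hasFDerivAt (hu.mem_nhds hq) (hφ q hq).differentiableAt.hasFDerivAt (hv q hq)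
  rw [← zero_add 1, contDiffOn_succ_iff_fderiv_of_isOpen hu, contDiffOn_zero]
  refine ⟨fun q hq => (hderiv q hq).differentiableAt.differentiableWithinAt, by simp, ?_⟩
  refine ContinuousOn.congr (fun q hq => ?_) fun q hq => (hderiv q hq).fderiv
  have hgraph : ContinuousAt (fun q => q + S q • v) q :=
    continuousAt_id.add ((hS.continuousAt (hu.mem_nhds hq)).smul continuousAt_const)
  have hfderiv : ContinuousAt (fun q => fderiv ℝ φ (q + S q • v)) q :=
    ContinuousAt.comp (f := fun q => q + S q • v) (hφ q hq).continuousAt_fderiv hgraph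
  exact (((hfderiv.clm_apply continuousAt_const).inv₀ (hv q hq)).neg.smul
    hfderiv).continuousWithinAt

end IsGraphHeight

lemma exists_apply_eq_one {ℓ : E →L[ℝ] ℝ} (hℓ : ℓ ≠ 0) : ∃ v, ℓ v = 1 :=
  LinearMap.surjective (f := (ℓ : E →ₗ[ℝ] ℝ)) (by exact_mod_cast hℓ) 1

theorem exists_convex_setOf_nonpos_inter {φ : E → ℝ} {y : E} (hφ : C11At φ y) (hy : φ y = 0)
    (hφ' : fderiv ℝ φ y ≠ 0)
    (hsecond : ∀ᶠ p in 𝓝 y, φ p = 0 → ∀ k, fderiv ℝ φ p k = 0 →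
      ∀ η > 0, ∃ᶠ t in 𝓝[>] 0, -η < secondQuotient φ p k t) :
    ∃ w ∈ 𝓝 y, Convex ℝ ({z | φ z ≤ 0} ∩ w) := by
  obtain ⟨v, hv⟩ := exists_apply_eq_one hφ'
  obtain ⟨S, u, hu, hS, hSy⟩ := exists_isGraphHeight hφ.hasStrictFDerivAt hy hv
  have hpositive : ∀ᶠ p in 𝓝 y, 0 < fderiv ℝ φ p v :=
    (hφ.continuousAt_fderiv.clm_apply continuousAt_const).eventually_const_lt (by simp [hv])
  have hgraph : Tendsto (fun q => q + S q • v) (𝓝 y) (𝓝 y) := by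
    have hcont : ContinuousAt (fun q => q + S q • v) y :=
      continuousAt_id.add ((hS.continuousAt hu).smul continuousAt_const)
    simpa [ContinuousAt, hSy] using hcont
  obtain ⟨ε, hε, hball⟩ := eventually_nhds_iff_ball.1 <|
    (eventually_mem_nhds_iff.2 hu).and
      (hgraph.eventually (hφ.eventually.and (hpositive.and hsecond)))
  have hSball : IsGraphHeight φ v S (ball y ε) := hS.mono fun q hq => mem_of_mem_nhds (hball q hq).1
  have hconcave : ConcaveOn ℝ (ball y ε) S := by
    refine concaveOn_of_frequently_secondQuotient_lt isOpen_ball (convex_ball y ε)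
      (hSball.contDiffOn isOpen_ball (fun q hq => (hball q hq).2.1)
        fun q hq => (hball q hq).2.2.1.ne') fun q hq k η hη => ?_
    obtain ⟨huq, hC11, hpos, hsecond_q⟩ := hball q hq
    exact hS.frequently_secondQuotient_lt huq hC11 hpos
      (hsecond_q (hSball.apply_add_smul_eq_zero q hq)) k hη
  refine ⟨ball y ε, ball_mem_nhds y hε, ?_⟩
  convert hconcave.convex_ge 0 using 1
  ext q
  exact and_comm.trans (and_congr_right fun hq => (hSball.nonneg_iff q hq).symm)

lemma fderiv_sub_nonpos_of_convex_s3 {φ : E → ℝ} {K : Set E} {p z : E} (hK : Convex ℝ K)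
    (hφ : DifferentiableAt ℝ φ p) (hp : φ p = 0) (hKφ : ∀ᶠ w in 𝓝 p, w ∈ K → φ w ≤ 0)
    (hpK : p ∈ K) (hzK : z ∈ K) : fderiv ℝ φ p (z - p) ≤ 0 := by
  have hmax : IsLocalMaxOn φ K p :=
    eventually_nhdsWithin_iff.2 (hKφ.mono fun w hw hwK => (hw hwK).trans hp.ge)
  exact hmax.hasFDerivWithinAt_nonpos hφ.hasFDerivAt.hasFDerivWithinAt
    (sub_mem_posTangentConeAt_of_segment_subset (hK.segment_subset hpK hzK))

lemma apply_div_nonneg_of_apply_nonpos_of_apply_nonneg {ℓ m : E →L[ℝ] ℝ} {k v : E} {t σ : ℝ}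
    (hk : ℓ k = 0) (hℓv : 0 < ℓ v) (hmv : 0 < m v) (hℓ : ℓ (t • k + σ • v) ≤ 0)
    (hm : 0 ≤ m (t • k + σ • v)) : 0 ≤ m k / t := by
  simp only [map_add, map_smul, hk, smul_eq_mul, mul_zero, zero_add] at hℓ hm
  have hσ : σ ≤ 0 := nonpos_of_mul_nonpos_left hℓ hℓv
  exact div_nonneg_iff.2 <| mul_nonneg_iff.1 <| by
    linarith [mul_nonpos_of_nonpos_of_nonneg hσ hmv.le]

theorem eventually_lt_secondQuotient_of_convex {φ : E → ℝ} {K : Set E} {y k : E} (hK : Convex ℝ K)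
    (hφ : C11At φ y) (hy : φ y = 0) (hφ' : fderiv ℝ φ y ≠ 0)
    (hKφ : ∀ᶠ z in 𝓝 y, z ∈ K ↔ φ z ≤ 0) (hk : fderiv ℝ φ y k = 0) {η : ℝ} (hη : 0 < η) :
    ∀ᶠ t in 𝓝 0, -η < secondQuotient φ y k t := by
  obtain ⟨v, hv⟩ := exists_apply_eq_one hφ'
  obtain ⟨S, u, hu, hS, hSy⟩ := exists_isGraphHeight hφ.hasStrictFDerivAt hy hv
  set path : ℝ → E := fun t => y + t • k + S (y + t • k) • v with hpath
  have hpath₀ : path 0 = y := by simp [hpath, hSy]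
  have hpath_deriv : HasDerivAt path k 0 :=
    hS.hasDerivAt_path_of_tangent hu hSy hφ.differentiableAt (by simp [hv]) hk
  have hnear : ∀ᶠ p in 𝓝 y, (∀ᶠ z in 𝓝 p, z ∈ K ↔ φ z ≤ 0) ∧ C11At φ p ∧ 0 < fderiv ℝ φ p v :=
    hKφ.eventually_nhds.and (hφ.eventually.and
      ((hφ.continuousAt_fderiv.clm_apply continuousAt_const).eventually_const_lt (by simp [hv])))
  have hu' : ∀ᶠ t in 𝓝 (0 : ℝ), y + t • k ∈ u :=
    (show ContinuousAt (fun t : ℝ => y + t • k) 0 by fun_prop).eventually_mem (by simpa using hu)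
  have hsmall := (hφ.tendsto_fderiv_curve_sub_div hpath_deriv hpath₀ k).eventually_lt_const hη
  filter_upwards [hpath_deriv.continuousAt.eventually (hpath₀ ▸ hnear), hu', hsmall]
    with t ⟨hKt, hC11, hpos⟩ hut hclose
  have hzero : φ (path t) = 0 := hS.apply_add_smul_eq_zero _ hut
  have hyK : y ∈ K := hKφ.self_of_nhds.2 hy.le
  have htK : path t ∈ K := hKt.self_of_nhds.2 hzero.le
  have hforward := fderiv_sub_nonpos_of_convex_s3 hK hφ.differentiableAt hy
    (hKφ.mono fun _ => Iff.mp) hyK htK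
  have hbackward := fderiv_sub_nonpos_of_convex_s3 hK hC11.differentiableAt hzero
    (hKt.mono fun _ => Iff.mp) htK hyK
  have hstep : path t - y = t • k + S (y + t • k) • v := by simp only [hpath]; abel
  have hpush : 0 ≤ fderiv ℝ φ (path t) k / t := by
    refine apply_div_nonneg_of_apply_nonpos_of_apply_nonneg (σ := S (y + t • k)) hk
      (by simp [hv]) hpos (hstep ▸ hforward) ?_
    rwa [← neg_sub, map_neg, neg_nonpos, hstep] at hbackward
  rw [secondQuotient, hk, sub_zero]
  rw [sub_div] at hclose
  linarith

lemma C11At.isLittleO_fderiv_sub_apply_fderiv_line_sub {φ : F → ℝ} {f : E → F} {x : E}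
    (hφ : C11At φ (f x)) (hf : C11At f x) (h : E) :
    (fun t : ℝ => (fderiv ℝ φ (f (x + t • h)) - fderiv ℝ φ (f x))
      ((fderiv ℝ f (x + t • h) - fderiv ℝ f x) h)) =o[𝓝 0] fun t => t := by
  have hline : Tendsto (fun t : ℝ => x + t • h) (𝓝 0) (𝓝 x) :=
    Continuous.tendsto' (by fun_prop) _ _ (by simp)
  have hvanish : (fun t : ℝ => fderiv ℝ φ (f (x + t • h)) - fderiv ℝ φ (f x)) =o[𝓝 0]
      fun _ => (1 : ℝ) := by
    rw [isLittleO_one_iff, tendsto_sub_nhds_zero_iff]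
    exact hφ.continuousAt_fderiv.tendsto.comp
      (hf.differentiableAt.continuousAt.tendsto.comp hline)
  have hfirst : (fun t : ℝ => (fderiv ℝ f (x + t • h) - fderiv ℝ f x) h) =O[𝓝 0] fun t => t :=
    ((ContinuousLinearMap.apply ℝ F h).isBigO_comp _ _).trans (hf.isBigO_fderiv_line_sub h)
  have hprod := hvanish.norm_left.mul_isBigO hfirst.norm_left
  simp only [one_mul] at hprod
  exact (IsBigO.of_norm_le fun t => ContinuousLinearMap.le_opNorm _ _).trans_isLittleO hprod

-- The derivative of `φ ∘ f` varies in two ways: through `f'`, which `φ'(f x) ∘ f` accounts for, and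
-- through `φ'`, which is evaluated along the curve `t ↦ f (x + t • h)` tangent to `f'(x) h`.
lemma C11At.tendsto_secondQuotient_comp_sub {φ : F → ℝ} {f : E → F} {x : E} (hφ : C11At φ (f x))
    (hf : C11At f x) (h : E) :
    Tendsto (fun t => secondQuotient (φ ∘ f) x h t - secondQuotient (fderiv ℝ φ (f x) ∘ f) x h t
      - secondQuotient φ (f x) (fderiv ℝ f x h) t) (𝓝 0) (𝓝 0) := by
  have hline : Tendsto (fun t : ℝ => x + t • h) (𝓝 0) (𝓝 x) :=
    Continuous.tendsto' (by fun_prop) _ _ (by simp)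
  have hcurve : HasDerivAt (fun t : ℝ => f (x + t • h)) (fderiv ℝ f x h) 0 :=
    hf.differentiableAt.hasFDerivAt.hasLineDerivAt h
  have hsum := (hφ.isLittleO_fderiv_sub_apply_fderiv_line_sub hf h).tendsto_div_nhds_zero.add
    (hφ.tendsto_fderiv_curve_sub_div hcurve (by simp) (fderiv ℝ f x h))
  rw [add_zero] at hsum
  refine hsum.congr' ?_
  filter_upwards [hline.eventually hf.1, (hf.differentiableAt.continuousAt.tendsto.comp
    hline).eventually hφ.1] with t hft hφt
  have hfx := hf.differentiableAt
  set ℓ := fderiv ℝ φ (f x)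
  simp only [secondQuotient]
  rw [fderiv_comp (x + t • h) hφt hft, fderiv_comp x hφ.differentiableAt hfx,
    fderiv_comp (x + t • h) ℓ.differentiableAt hft, fderiv_comp x ℓ.differentiableAt hfx]
  simp only [ContinuousLinearMap.fderiv, ContinuousLinearMap.comp_apply, sub_apply, map_sub]
  ring

/-- `D f x h h` is monotone in the difference quotient of `f` along the filter `l`, as long as this
quotient is bounded, in the sharp form that shifting the quotient by `c` shifts the value by at
least `c`. The four generalized second-order directional derivatives have this property, with `l`
one of `𝓝[>] 0` and `𝓝[<] 0`. -/
def IsMonotoneSecondDeriv (l : Filter ℝ) (D : (E → ℝ) → E → E → E → ℝ) : Prop :=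
  ∀ ⦃f₁ f₂ : E → ℝ⦄ ⦃x h : E⦄ ⦃c : ℝ⦄,
    IsBoundedUnder (· ≤ ·) l (fun t => |secondQuotient f₁ x h t|) →
    IsBoundedUnder (· ≤ ·) l (fun t => |secondQuotient f₂ x h t|) →
    (∀ᶠ t in l, secondQuotient f₁ x h t + c ≤ secondQuotient f₂ x h t) →
    D f₁ x h h + c ≤ D f₂ x h h

lemma isMonotoneSecondDeriv_liminf (l : Filter ℝ) [l.NeBot] :
    IsMonotoneSecondDeriv l fun (f : E → ℝ) x h k =>
      liminf (fun t : ℝ => (fderiv ℝ f (x + t • h) k - fderiv ℝ f x k) / t) l := by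
  intro f₁ f₂ x h c hf₁ hf₂ hle
  obtain ⟨hf₁_le, hf₁_ge⟩ := isBoundedUnder_le_abs.1 hf₁
  obtain ⟨hf₂_le, -⟩ := isBoundedUnder_le_abs.1 hf₂
  refine (liminf_add_const l _ c hf₁_le.isCoboundedUnder_ge hf₁_ge).ge.trans ?_
  exact liminf_le_liminf hle (isBoundedUnder_ge_add hf₁_ge isBoundedUnder_const)
    hf₂_le.isCoboundedUnder_ge

lemma isMonotoneSecondDeriv_limsup (l : Filter ℝ) [l.NeBot] :
    IsMonotoneSecondDeriv l fun (f : E → ℝ) x h k =>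
      limsup (fun t : ℝ => (fderiv ℝ f (x + t • h) k - fderiv ℝ f x k) / t) l := by
  intro f₁ f₂ x h c hf₁ hf₂ hle
  obtain ⟨hf₁_le, hf₁_ge⟩ := isBoundedUnder_le_abs.1 hf₁
  obtain ⟨hf₂_le, -⟩ := isBoundedUnder_le_abs.1 hf₂
  refine (limsup_add_const l _ c hf₁_le hf₁_ge.isCoboundedUnder_le).ge.trans ?_
  exact limsup_le_limsup hle
    (isBoundedUnder_ge_add hf₁_ge isBoundedUnder_const).isCoboundedUnder_le hf₂_le

namespace IsMonotoneSecondDeriv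

variable {l : Filter ℝ} {D : (E → ℝ) → E → E → E → ℝ} {f₁ f₂ : E → ℝ} {x h : E}

lemma le_of_eventually (hD : IsMonotoneSecondDeriv l D) (hl : l ≤ 𝓝 0) (hf₁ : C11At f₁ x)
    (hf₂ : C11At f₂ x)
    (hle : ∀ η > 0, ∀ᶠ t in l, secondQuotient f₁ x h t - η ≤ secondQuotient f₂ x h t) :
    D f₁ x h h ≤ D f₂ x h h := by
  refine le_of_forall_pos_le_add fun η hη => ?_
  have hshift := hD ((hf₁.isBoundedUnder_secondQuotient h).mono hl)
    ((hf₂.isBoundedUnder_secondQuotient h).mono hl) (c := -η) (hle η hη)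
  linarith

lemma frequently_of_le (hD : IsMonotoneSecondDeriv l D) (hl : l ≤ 𝓝 0) (hf₁ : C11At f₁ x)
    (hf₂ : C11At f₂ x) (hle : D f₁ x h h ≤ D f₂ x h h) {η : ℝ} (hη : 0 < η) :
    ∃ᶠ t in l, secondQuotient f₁ x h t - η < secondQuotient f₂ x h t := by
  rw [Filter.Frequently]
  intro hgap
  have hshift := hD ((hf₂.isBoundedUnder_secondQuotient h).mono hl)
    ((hf₁.isBoundedUnder_secondQuotient h).mono hl) (c := η)
    (hgap.mono fun t ht => by linarith)
  linarith

end IsMonotoneSecondDeriv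

section Transfer

variable {l : Filter ℝ} {D : (E → ℝ) → E → E → E → ℝ} {g : E → ℝ} {φ : F → ℝ} {f : E → F} {x h : E}

lemma tendsto_secondQuotient_sub_of_eventuallyEq_comp (hgφ : g =ᶠ[𝓝 x] φ ∘ f)
    (hφ : C11At φ (f x)) (hf : C11At f x) (h : E) :
    Tendsto (fun t => secondQuotient g x h t - secondQuotient (fderiv ℝ φ (f x) ∘ f) x h t
      - secondQuotient φ (f x) (fderiv ℝ f x h) t) (𝓝 0) (𝓝 0) := by
  refine (hφ.tendsto_secondQuotient_comp_sub hf h).congr' ?_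
  filter_upwards [secondQuotient_congr hgφ h] with t ht
  rw [ht]

lemma IsMonotoneSecondDeriv.le_of_eventually_lt_secondQuotient (hD : IsMonotoneSecondDeriv l D)
    (hl : l ≤ 𝓝 0) (hgφ : g =ᶠ[𝓝 x] φ ∘ f) (hg : C11At g x) (hφ : C11At φ (f x)) (hf : C11At f x)
    (hlower : ∀ η > 0, ∀ᶠ t in l, -η < secondQuotient φ (f x) (fderiv ℝ f x h) t) :
    D (fderiv ℝ φ (f x) ∘ f) x h h ≤ D g x h h := by
  refine hD.le_of_eventually hl (hf.clm_comp _) hg fun η hη => ?_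
  have hdefect := (tendsto_secondQuotient_sub_of_eventuallyEq_comp hgφ hφ hf h).eventually_const_lt
    (show -(η / 2) < 0 by linarith)
  filter_upwards [hl hdefect, hlower (η / 2) (half_pos hη)] with t hdefect_t hlower_t
  linarith

lemma IsMonotoneSecondDeriv.frequently_lt_secondQuotient_of_le (hD : IsMonotoneSecondDeriv l D)
    (hl : l ≤ 𝓝 0) (hgφ : g =ᶠ[𝓝 x] φ ∘ f) (hg : C11At g x) (hφ : C11At φ (f x)) (hf : C11At f x)
    (hle : D (fderiv ℝ φ (f x) ∘ f) x h h ≤ D g x h h) {η : ℝ} (hη : 0 < η) :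
    ∃ᶠ t in l, -η < secondQuotient φ (f x) (fderiv ℝ f x h) t := by
  have hdefect := (tendsto_secondQuotient_sub_of_eventuallyEq_comp hgφ hφ hf h).eventually_lt_const
    (half_pos hη)
  have hfreq := hD.frequently_of_le hl (hf.clm_comp _) hg hle (half_pos hη)
  refine (hfreq.and_eventually (hl hdefect)).mono fun t ht => ?_
  linarith [ht.1, ht.2]

end Transfer

lemma frequently_nhdsGT_lt_secondQuotient {φ : E → ℝ} {ℓ : E →L[ℝ] ℝ} {l : Filter ℝ} {y : E} {η : ℝ}
    (hl : l ≤ 𝓝[>] 0 ∨ l ≤ 𝓝[<] 0)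
    (hfreq : ∀ k, ℓ k = 0 → ∃ᶠ t in l, -η < secondQuotient φ y k t) {k : E} (hk : ℓ k = 0) :
    ∃ᶠ t in 𝓝[>] 0, -η < secondQuotient φ y k t := by
  rcases hl with hl | hl
  · exact (hfreq k hk).filter_mono hl
  · have hneg : Tendsto Neg.neg (𝓝[<] 0) (𝓝[>] (0 : ℝ)) := by
      simpa using tendsto_neg_nhdsLT (a := (0 : ℝ))
    refine hneg.frequently (((hfreq (-k) (by simp [hk])).filter_mono hl).mono fun t ht => ?_)
    rwa [← secondQuotient_neg_neg, neg_neg]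

section Sublevel

variable {φ : E → ℝ} {V : Set E}

lemma frontier_setOf_mem_nonpos_eq (hV : IsOpen V) (hφ : ContinuousOn φ V)
    (hcl : IsClosed {y ∈ V | φ y ≤ 0}) (hφ' : ∀ y ∈ V, φ y = 0 → fderiv ℝ φ y ≠ 0) :
    frontier {y ∈ V | φ y ≤ 0} = {y ∈ V | φ y = 0} := by
  rw [hcl.frontier_eq]
  ext y
  refine ⟨fun ⟨⟨hyV, hy⟩, hy_int⟩ => ⟨hyV, hy.antisymm (not_lt.1 fun hlt => hy_int ?_)⟩,
    fun ⟨hyV, hy⟩ => ⟨⟨hyV, hy.le⟩, fun hy_int => hφ' y hyV hy ?_⟩⟩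
  · rw [mem_interior_iff_mem_nhds]
    filter_upwards [hV.mem_nhds hyV, (hφ.continuousAt (hV.mem_nhds hyV)).eventually_lt_const hlt]
      with z hzV hz using ⟨hzV, hz.le⟩
  · have hmax : IsLocalMax φ y := by
      filter_upwards [mem_interior_iff_mem_nhds.1 hy_int] with z hz using hz.2.trans hy.ge
    exact hmax.fderiv_eq_zero

theorem convex_setOf_mem_nonpos_of_frequently_lt_secondQuotient (hV : IsOpen V)
    (hφ : ContinuousOn φ V) (hcl : IsClosed {y ∈ V | φ y ≤ 0})
    (hconn : IsPreconnected {y ∈ V | φ y ≤ 0})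
    (hC11 : ∀ y ∈ V, φ y = 0 → C11At φ y ∧ fderiv ℝ φ y ≠ 0)
    (hsecond : ∀ y ∈ V, φ y = 0 → ∀ k, fderiv ℝ φ y k = 0 →
      ∀ η > 0, ∃ᶠ t in 𝓝[>] 0, -η < secondQuotient φ y k t) :
    Convex ℝ {y ∈ V | φ y ≤ 0} := by
  refine convex_of_isPreconnected_of_locally_convex hcl hconn fun p ⟨hpV, hp⟩ => ?_
  obtain ⟨ε, hε, hball⟩ := nhds_basis_ball.mem_iff.1 (hV.mem_nhds hpV)
  rcases hp.lt_or_eq with hneg | hzero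
  · obtain ⟨δ, hδ, hδball⟩ := nhds_basis_ball.mem_iff.1 <| inter_mem (hV.mem_nhds hpV) <|
      (hφ.continuousAt (hV.mem_nhds hpV)).eventually_lt_const hneg
    refine ⟨ball p δ, ball_mem_nhds p hδ, ?_⟩
    have hsub : ball p δ ⊆ {y ∈ V | φ y ≤ 0} := fun z hz => ⟨(hδball hz).1, le_of_lt (hδball hz).2⟩
    rw [inter_eq_right.2 hsub]
    exact convex_ball p δ
  · obtain ⟨w, hw, hconv⟩ := exists_convex_setOf_nonpos_inter (hC11 p hpV hzero).1 hzero
      (hC11 p hpV hzero).2 ((hV.eventually_mem hpV).mono hsecond)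
    refine ⟨w ∩ ball p ε, inter_mem hw (ball_mem_nhds p hε), ?_⟩
    convert hconv.inter (convex_ball p ε) using 1
    ext z
    exact ⟨fun hz => ⟨⟨hz.1.2, hz.2.1⟩, hz.2.2⟩, fun hz => ⟨⟨hball hz.2, hz.1.1⟩, hz.1.2, hz.2⟩⟩

end Sublevel

lemma IsC11SubmersionOnZeroSet.c11At {g : E → ℝ} {U : Set E} {x : E}
    (hg : IsC11SubmersionOnZeroSet g U) (hx : x ∈ U) (hgx : g x = 0) : C11At g x := by
  obtain ⟨⟨ε, hε, -, hC1, L, hL⟩, -⟩ := hg x hx hgx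
  exact .of_contDiffOn isOpen_ball (mem_ball_self hε) hC1 (ball_mem_nhds x hε) hL

namespace IsC11DiffeoOn

variable {f : E → F} {G : F → E} {U : Set E} {V : Set F} {g : E → ℝ} {x : E}

lemma symm (hf : IsC11DiffeoOn f G U V) : IsC11DiffeoOn G f V U := by
  obtain ⟨hmaps, hmaps', hleft, hright, hC1, hLip, hC1', hLip'⟩ := hf
  exact ⟨hmaps', hmaps, hright, hleft, hC1', hLip', hC1, hLip⟩

lemma c11At (hf : IsC11DiffeoOn f G U V) (hU : IsOpen U) (hx : x ∈ U) : C11At f x := by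
  obtain ⟨-, -, -, -, hC1, hLip, -⟩ := hf
  obtain ⟨ε, hε, L, hL⟩ := hLip x hx
  exact .of_contDiffOn hU hx hC1 (inter_mem (ball_mem_nhds x hε) (hU.mem_nhds hx)) hL

lemma continuousOn (hf : IsC11DiffeoOn f G U V) : ContinuousOn f U := hf.2.2.2.2.1.continuousOn

lemma image_setOf_mem_nonpos (hf : IsC11DiffeoOn f G U V) (g : E → ℝ) :
    f '' {x ∈ U | g x ≤ 0} = {y ∈ V | (g ∘ G) y ≤ 0} := by
  obtain ⟨hmaps, hmaps', hleft, hright, -⟩ := hf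
  ext y
  constructor
  · rintro ⟨x, ⟨hxU, hgx⟩, rfl⟩
    exact ⟨hmaps hxU, by rwa [Function.comp_apply, hleft x hxU]⟩
  · exact fun ⟨hyV, hy⟩ => ⟨G y, ⟨hmaps' hyV, hy⟩, hright y hyV⟩

lemma eventuallyEq_comp (hf : IsC11DiffeoOn f G U V) (hU : IsOpen U) (hx : x ∈ U) (g : E → ℝ) :
    g =ᶠ[𝓝 x] (g ∘ G) ∘ f := by
  obtain ⟨-, -, hleft, -⟩ := hf
  filter_upwards [hU.mem_nhds hx] with z hz
  simp only [Function.comp_apply, hleft z hz]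

lemma c11At_comp (hf : IsC11DiffeoOn f G U V) (hV : IsOpen V) (hx : x ∈ U) (hg : C11At g x) :
    C11At (g ∘ G) (f x) := by
  have hGf : G (f x) = x := hf.2.2.1 x hx
  exact .comp (hGf.symm ▸ hg) (hf.symm.c11At hV (hf.1 hx))

lemma fderiv_eq_comp (hf : IsC11DiffeoOn f G U V) (hU : IsOpen U) (hV : IsOpen V) (hx : x ∈ U)
    (hg : C11At g x) :
    fderiv ℝ g x = (fderiv ℝ (g ∘ G) (f x)).comp (fderiv ℝ f x) := by
  rw [(hf.eventuallyEq_comp hU hx g).fderiv_eq]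
  exact fderiv_comp x (hf.c11At_comp hV hx hg).differentiableAt (hf.c11At hU hx).differentiableAt

lemma fderiv_comp_ne_zero (hf : IsC11DiffeoOn f G U V) (hU : IsOpen U) (hV : IsOpen V)
    (hx : x ∈ U) (hg : C11At g x) (hg' : fderiv ℝ g x ≠ 0) : fderiv ℝ (g ∘ G) (f x) ≠ 0 := by
  intro hzero
  rw [hf.fderiv_eq_comp hU hV hx hg, hzero, ContinuousLinearMap.zero_comp] at hg'
  exact hg' rfl

lemma fderiv_apply_rightInverse (hf : IsC11DiffeoOn f G U V) (hU : IsOpen U) (hV : IsOpen V)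
    (hx : x ∈ U) (hg : C11At g x) {f' : F →L[ℝ] E}
    (hf' : (fderiv ℝ f x).comp f' = ContinuousLinearMap.id ℝ F) (k : F) :
    fderiv ℝ g x (f' k) = fderiv ℝ (g ∘ G) (f x) k := by
  rw [hf.fderiv_eq_comp hU hV hx hg, ← ContinuousLinearMap.comp_apply,
    ContinuousLinearMap.comp_assoc, hf', ContinuousLinearMap.comp_id]

variable {f' : F →L[ℝ] E} {l : Filter ℝ} {D : (E → ℝ) → E → E → E → ℝ}

lemma secondDeriv_le_of_convex_image (hf : IsC11DiffeoOn f G U V) (hU : IsOpen U) (hV : IsOpen V)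
    (hx : x ∈ U) (hgx : g x = 0) (hg : C11At g x) (hg' : fderiv ℝ g x ≠ 0)
    (hf' : (fderiv ℝ f x).comp f' = ContinuousLinearMap.id ℝ F) (hl : l ≤ 𝓝 0)
    (hD : IsMonotoneSecondDeriv l D) (hconv : Convex ℝ (f '' {x ∈ U | g x ≤ 0})) {h : E}
    (hh : fderiv ℝ g x h = 0) :
    D (fun z => fderiv ℝ g x (f' (f z))) x h h ≤ D g x h h := by
  have hgGf := hf.eventuallyEq_comp hU hx g
  have hφ := hf.c11At_comp hV hx hg
  have hφ₀ : (g ∘ G) (f x) = 0 := hgGf.eq_of_nhds.symm.trans hgx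
  have hmem : ∀ᶠ y in 𝓝 (f x), y ∈ f '' {x ∈ U | g x ≤ 0} ↔ (g ∘ G) y ≤ 0 := by
    rw [hf.image_setOf_mem_nonpos]
    exact (hV.eventually_mem (hf.1 hx)).mono fun y hy => and_iff_right hy
  rw [hf.fderiv_eq_comp hU hV hx hg] at hh
  simp only [hf.fderiv_apply_rightInverse hU hV hx hg hf']
  exact hD.le_of_eventually_lt_secondQuotient hl hgGf hg hφ (hf.c11At hU hx) fun η hη =>
    hl <| eventually_lt_secondQuotient_of_convex hconv hφ hφ₀
      (hf.fderiv_comp_ne_zero hU hV hx hg hg') hmem hh hη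

lemma frequently_lt_secondQuotient_comp (hf : IsC11DiffeoOn f G U V) (hU : IsOpen U)
    (hV : IsOpen V) (hx : x ∈ U) (hg : C11At g x)
    (hf' : (fderiv ℝ f x).comp f' = ContinuousLinearMap.id ℝ F) (hl : l ≤ 𝓝 0)
    (hD : IsMonotoneSecondDeriv l D)
    (hle : ∀ h, fderiv ℝ g x h = 0 → D (fun z => fderiv ℝ g x (f' (f z))) x h h ≤ D g x h h)
    {k : F} (hk : fderiv ℝ (g ∘ G) (f x) k = 0) {η : ℝ} (hη : 0 < η) :
    ∃ᶠ t in l, -η < secondQuotient (g ∘ G) (f x) k t := by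
  simp only [hf.fderiv_apply_rightInverse hU hV hx hg hf'] at hle
  have hk' : fderiv ℝ g x (f' k) = 0 := by
    rwa [hf.fderiv_apply_rightInverse hU hV hx hg hf']
  have hpull : fderiv ℝ f x (f' k) = k := DFunLike.congr_fun hf' k
  have hfreq := hD.frequently_lt_secondQuotient_of_le hl (hf.eventuallyEq_comp hU hx g) hg
    (hf.c11At_comp hV hx hg) (hf.c11At hU hx) (hle _ hk') hη
  rwa [hpull] at hfreq

end IsC11DiffeoOn

theorem stmt_3_general {U : Set E} {V : Set F} (hU : IsOpen U) (hV : IsOpen V)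
    {g : E → ℝ} (hgc : ContinuousOn g U) (hgs : IsC11SubmersionOnZeroSet g U)
    (hcl : IsClosed {x ∈ U | g x ≤ 0}) (hconn : IsPreconnected {x ∈ U | g x ≤ 0})
    {f : E → F} {G : F → E} (hf : IsC11DiffeoOn f G U V)
    (hcl_image : IsClosed (f '' {x ∈ U | g x ≤ 0}))
    {finv' : E → F →L[ℝ] E}
    (hfinv' : ∀ x ∈ U, (fderiv ℝ f x).comp (finv' x) = ContinuousLinearMap.id ℝ F)
    {l : Filter ℝ} (hl : l ≤ 𝓝[>] 0 ∨ l ≤ 𝓝[<] 0)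
    {D : (E → ℝ) → E → E → E → ℝ} (hD : IsMonotoneSecondDeriv l D) :
    Convex ℝ (f '' {x ∈ U | g x ≤ 0}) ↔
      ∀ x ∈ frontier {x ∈ U | g x ≤ 0}, ∀ h : E, fderiv ℝ g x h = 0 →
        D (fun z => fderiv ℝ g x (finv' x (f z))) x h h ≤ D g x h h := by
  have hl₀ : l ≤ 𝓝 0 := hl.elim (·.trans nhdsWithin_le_nhds) (·.trans nhdsWithin_le_nhds)
  rw [frontier_setOf_mem_nonpos_eq hU hgc hcl fun x hx hgx => (hgs x hx hgx).2]
  constructor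
  · rintro hconv x ⟨hx, hgx⟩ h hh
    exact hf.secondDeriv_le_of_convex_image hU hV hx hgx (hgs.c11At hx hgx) (hgs x hx hgx).2
      (hfinv' x hx) hl₀ hD hconv hh
  · intro hle
    have hconn_image := hconn.image f (hf.continuousOn.mono fun x hx => hx.1)
    have hzero : ∀ y ∈ V, (g ∘ G) y = 0 → ∃ x ∈ U, g x = 0 ∧ f x = y := fun y hy hφy =>
      ⟨G y, hf.2.1 hy, hφy, hf.2.2.2.1 y hy⟩
    rw [hf.image_setOf_mem_nonpos] at hcl_image hconn_image ⊢
    refine convex_setOf_mem_nonpos_of_frequently_lt_secondQuotient hV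
      (hgc.comp hf.symm.continuousOn hf.symm.1) hcl_image hconn_image
      (fun y hy hφy => ?_) (fun y hy hφy k hk η hη => ?_)
    · obtain ⟨x, hx, hgx, rfl⟩ := hzero y hy hφy
      exact ⟨hf.c11At_comp hV hx (hgs.c11At hx hgx),
        hf.fderiv_comp_ne_zero hU hV hx (hgs.c11At hx hgx) (hgs x hx hgx).2⟩
    · obtain ⟨x, hx, hgx, rfl⟩ := hzero y hy hφy
      exact frequently_nhdsGT_lt_secondQuotient hl (fun k hk =>
        hf.frequently_lt_secondQuotient_comp hU hV hx (hgs.c11At hx hgx) (hfinv' x hx) hl₀ hD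
          (hle x ⟨hx, hgx⟩) hk hη) hk

end C11

/-- Let `X, Y` be real Banach spaces, `U ⊆ X`, `V ⊆ Y` open, `g : U → ℝ`
continuous and a `C^{1,1}`-submersion on its zero set, `Ω = {x ∈ U : g(x) ≤ 0}` closed and
connected, `F : U → V` a `C^{1,1}`-diffeomorphism and `F(Ω)` closed.  Let `𝒟²` be any of the
four generalized second-order directional derivative operators.  Then `F(Ω)` is convex iff
`𝒟²(y ↦ g'(x)(F'(x)⁻¹F(y)))(x,h²) ≤ 𝒟²g(x,h²)` for all `x ∈ ∂Ω` and all `h ∈ ker g'(x)`. -/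
theorem stmt_3 {X Y : Type*} [NormedAddCommGroup X] [NormedSpace ℝ X] [CompleteSpace X]
    [NormedAddCommGroup Y] [NormedSpace ℝ Y] [CompleteSpace Y]
    (U : Set X) (V : Set Y) (hUo : IsOpen U) (hVo : IsOpen V)
    (g : X → ℝ) (hgc : ContinuousOn g U) (hgs : IsC11SubmersionOnZeroSet g U)
    (Ω : Set X) (hΩ : Ω = {x ∈ U | g x ≤ 0})
    (hcl : IsClosed Ω) (hconn : IsConnected Ω)
    (F : X → Y) (G : Y → X) (hF : IsC11DiffeoOn F G U V)
    (hFΩcl : IsClosed (F '' Ω))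
    (Finv' : X → Y →L[ℝ] X)
    (hFinv' : ∀ x ∈ U, (Finv' x).comp (fderiv ℝ F x) = ContinuousLinearMap.id ℝ X ∧
      (fderiv ℝ F x).comp (Finv' x) = ContinuousLinearMap.id ℝ Y)
    (D : (X → ℝ) → X → X → X → ℝ)
    (hD : D = lowD2p ∨ D = upD2p ∨ D = lowD2m ∨ D = upD2m) :
    Convex ℝ (F '' Ω) ↔
      ∀ x ∈ frontier Ω, ∀ h : X, fderiv ℝ g x h = 0 →
        D (fun y => fderiv ℝ g x (Finv' x (F y))) x h h ≤ D g x h h := by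
  subst hΩ
  have hgeneral {l : Filter ℝ} (hl : l ≤ 𝓝[>] 0 ∨ l ≤ 𝓝[<] 0) (hDl : IsMonotoneSecondDeriv l D) :=
    stmt_3_general hUo hVo hgc hgs hcl hconn.isPreconnected hF hFΩcl
      (fun x hx => (hFinv' x hx).2) hl hDl
  rcases hD with rfl | rfl | rfl | rfl
  · exact hgeneral (.inl le_rfl) (isMonotoneSecondDeriv_liminf _)
  · exact hgeneral (.inl le_rfl) (isMonotoneSecondDeriv_limsup _)
  · exact hgeneral (.inr le_rfl) (isMonotoneSecondDeriv_liminf _)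
  · exact hgeneral (.inr le_rfl) (isMonotoneSecondDeriv_limsup _)
end
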